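/- Assume f(x) = f̃(|x|) with f̃ : [0,∞) → ℝ a C¹ nonnegative function with compact support, not identically zero, and u₀(x) = ũ₀(|x|) with ũ₀ bounded and uniformly continuous on [0,∞). Let u : ℝⁿ × [0,∞) → ℝ be continuous, bounded and uniformly continuous on ℝⁿ × [0,T] for every T > 0, with u(·,0) = u₀, and a viscosity solution of u_t - (div(Du/|Du|)+1)|Du| = f(x) in ℝⁿ × (0,∞). Set c := max_{|x| ≥ n-1} f(x). Then there exists a continuous function v_∞ : ℝⁿ → ℝ which is a viscosity solution of -(div(Dv/|Dv|)+1)|Dv| = f(x) - c in ℝⁿ, such that u(x,t) - c·t → v_∞(x) locally uniformly in x ∈ ℝⁿ as t → ∞. -/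

import Mathlib

open Set Filter Topology
open scoped RealInnerProductSpace

noncomputable section

/-- The trace of a continuous linear endomorphism of `ℝⁿ`. -/
def clmTrace {n : ℕ} (A : EuclideanSpace ℝ (Fin n) →L[ℝ] EuclideanSpace ℝ (Fin n)) : ℝ :=
  LinearMap.trace ℝ (EuclideanSpace ℝ (Fin n)) A.toLinearMap

/-- The (spatial) Hessian of `φ : ℝⁿ → ℝ` at `x`, as the derivative of the gradient. -/
def hess {n : ℕ} (φ : EuclideanSpace ℝ (Fin n) → ℝ) (x : EuclideanSpace ℝ (Fin n)) :
    EuclideanSpace ℝ (Fin n) →L[ℝ] EuclideanSpace ℝ (Fin n) :=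
  fderiv ℝ (gradient φ) x

/-- `tr((I - η⊗η) D²φ(x))` for a continuous linear map `A = D²φ(x)` and `η ∈ ℝⁿ`. -/
def trProj {n : ℕ} (A : EuclideanSpace ℝ (Fin n) →L[ℝ] EuclideanSpace ℝ (Fin n))
    (η : EuclideanSpace ℝ (Fin n)) : ℝ :=
  clmTrace A - ⟪A η, η⟫

/-- `v` is a viscosity subsolution of the stationary level-set equation
`-(div(Dv/|Dv|)+1)|Dv| = g(x)` on the open set `O ⊆ ℝⁿ`.  When the gradient of
the test function does not vanish one uses `η = Dφ/|Dφ|`, noting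
`div(Dφ/|Dφ|)·|Dφ| = tr((I - η⊗η) D²φ)`; when it vanishes, some `η` with `|η| ≤ 1`. -/
def StatSubsol {n : ℕ} (g : EuclideanSpace ℝ (Fin n) → ℝ) (O : Set (EuclideanSpace ℝ (Fin n)))
    (v : EuclideanSpace ℝ (Fin n) → ℝ) : Prop :=
  ∀ φ : EuclideanSpace ℝ (Fin n) → ℝ, ContDiff ℝ 2 φ →
    ∀ x₀ ∈ O, IsLocalMax (fun x => v x - φ x) x₀ →
      (gradient φ x₀ ≠ 0 →
        -(trProj (hess φ x₀) (‖gradient φ x₀‖⁻¹ • gradient φ x₀) + ‖gradient φ x₀‖) ≤ g x₀) ∧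
      (gradient φ x₀ = 0 →
        ∃ η : EuclideanSpace ℝ (Fin n), ‖η‖ ≤ 1 ∧ -(trProj (hess φ x₀) η) ≤ g x₀)

/-- Viscosity supersolution of the stationary level-set equation
`-(div(Dv/|Dv|)+1)|Dv| = g(x)` on the open set `O ⊆ ℝⁿ`. -/
def StatSupersol {n : ℕ} (g : EuclideanSpace ℝ (Fin n) → ℝ) (O : Set (EuclideanSpace ℝ (Fin n)))
    (v : EuclideanSpace ℝ (Fin n) → ℝ) : Prop :=
  ∀ φ : EuclideanSpace ℝ (Fin n) → ℝ, ContDiff ℝ 2 φ →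
    ∀ x₀ ∈ O, IsLocalMin (fun x => v x - φ x) x₀ →
      (gradient φ x₀ ≠ 0 →
        -(trProj (hess φ x₀) (‖gradient φ x₀‖⁻¹ • gradient φ x₀) + ‖gradient φ x₀‖) ≥ g x₀) ∧
      (gradient φ x₀ = 0 →
        ∃ η : EuclideanSpace ℝ (Fin n), ‖η‖ ≤ 1 ∧ -(trProj (hess φ x₀) η) ≥ g x₀)

/-- Spatial gradient of a space-time test function. -/
def sGrad {n : ℕ} (φ : EuclideanSpace ℝ (Fin n) → ℝ → ℝ) (x : EuclideanSpace ℝ (Fin n))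
    (t : ℝ) : EuclideanSpace ℝ (Fin n) :=
  gradient (fun y => φ y t) x

/-- Spatial Hessian of a space-time test function. -/
def sHess {n : ℕ} (φ : EuclideanSpace ℝ (Fin n) → ℝ → ℝ) (x : EuclideanSpace ℝ (Fin n))
    (t : ℝ) : EuclideanSpace ℝ (Fin n) →L[ℝ] EuclideanSpace ℝ (Fin n) :=
  fderiv ℝ (fun y => gradient (fun z => φ z t) y) x

/-- Time derivative of a space-time test function. -/
def tDeriv {n : ℕ} (φ : EuclideanSpace ℝ (Fin n) → ℝ → ℝ) (x : EuclideanSpace ℝ (Fin n))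
    (t : ℝ) : ℝ :=
  deriv (fun s => φ x s) t

/-- `u` is a viscosity subsolution of the level-set equation
`u_t - (div(Du/|Du|)+1)|Du| = f(x)` in `O × (0,∞)`: at any local maximum `(x₀,t₀)`,
`t₀ > 0`, `x₀ ∈ O`, of `u - φ` with `φ` C², the subsolution inequality holds, where
`(div(D_xφ/|D_xφ|)+1)|D_xφ| = tr((I - η⊗η) D_x²φ) + |D_xφ|` with `η = D_xφ/|D_xφ|`
if `D_xφ ≠ 0`, and with some `η`, `|η| ≤ 1`, and no `|D_xφ|` term if `D_xφ = 0`. -/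
def ParabSubsol {n : ℕ} (f : EuclideanSpace ℝ (Fin n) → ℝ) (O : Set (EuclideanSpace ℝ (Fin n)))
    (u : EuclideanSpace ℝ (Fin n) → ℝ → ℝ) : Prop :=
  ∀ φ : EuclideanSpace ℝ (Fin n) → ℝ → ℝ,
    ContDiff ℝ 2 (fun p : EuclideanSpace ℝ (Fin n) × ℝ => φ p.1 p.2) →
    ∀ x₀ ∈ O, ∀ t₀ : ℝ, 0 < t₀ →
      IsLocalMax (fun p : EuclideanSpace ℝ (Fin n) × ℝ => u p.1 p.2 - φ p.1 p.2) (x₀, t₀) →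
        (sGrad φ x₀ t₀ ≠ 0 →
          tDeriv φ x₀ t₀ -
            (trProj (sHess φ x₀ t₀) (‖sGrad φ x₀ t₀‖⁻¹ • sGrad φ x₀ t₀) + ‖sGrad φ x₀ t₀‖)
            ≤ f x₀) ∧
        (sGrad φ x₀ t₀ = 0 →
          ∃ η : EuclideanSpace ℝ (Fin n), ‖η‖ ≤ 1 ∧
            tDeriv φ x₀ t₀ - trProj (sHess φ x₀ t₀) η ≤ f x₀)

/-- Viscosity supersolution of the level-set equation
`u_t - (div(Du/|Du|)+1)|Du| = f(x)` in `O × (0,∞)`. -/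
def ParabSupersol {n : ℕ} (f : EuclideanSpace ℝ (Fin n) → ℝ) (O : Set (EuclideanSpace ℝ (Fin n)))
    (u : EuclideanSpace ℝ (Fin n) → ℝ → ℝ) : Prop :=
  ∀ φ : EuclideanSpace ℝ (Fin n) → ℝ → ℝ,
    ContDiff ℝ 2 (fun p : EuclideanSpace ℝ (Fin n) × ℝ => φ p.1 p.2) →
    ∀ x₀ ∈ O, ∀ t₀ : ℝ, 0 < t₀ →
      IsLocalMin (fun p : EuclideanSpace ℝ (Fin n) × ℝ => u p.1 p.2 - φ p.1 p.2) (x₀, t₀) →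
        (sGrad φ x₀ t₀ ≠ 0 →
          tDeriv φ x₀ t₀ -
            (trProj (sHess φ x₀ t₀) (‖sGrad φ x₀ t₀‖⁻¹ • sGrad φ x₀ t₀) + ‖sGrad φ x₀ t₀‖)
            ≥ f x₀) ∧
        (sGrad φ x₀ t₀ = 0 →
          ∃ η : EuclideanSpace ℝ (Fin n), ‖η‖ ≤ 1 ∧
            tDeriv φ x₀ t₀ - trProj (sHess φ x₀ t₀) η ≥ f x₀)

end

/-- Euclidean space. -/
abbrev EE (n : ℕ) := EuclideanSpace ℝ (Fin n)

/-- Signed viscosity subsolution property. -/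
def PSub {n : ℕ} (σ : ℝ) (g : EE n → ℝ) (u : EE n → ℝ → ℝ) : Prop :=
  ∀ φ : EE n → ℝ → ℝ,
    ContDiff ℝ 2 (fun p : EE n × ℝ => φ p.1 p.2) →
    ∀ x₀ : EE n, ∀ t₀ : ℝ, 0 < t₀ →
      IsLocalMax (fun p : EE n × ℝ => u p.1 p.2 - φ p.1 p.2) (x₀, t₀) →
        (sGrad φ x₀ t₀ ≠ 0 →
          tDeriv φ x₀ t₀ -
            (trProj (sHess φ x₀ t₀) (‖sGrad φ x₀ t₀‖⁻¹ • sGrad φ x₀ t₀) + σ * ‖sGrad φ x₀ t₀‖)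
            ≤ g x₀) ∧
        (sGrad φ x₀ t₀ = 0 →
          ∃ η : EE n, ‖η‖ ≤ 1 ∧
            tDeriv φ x₀ t₀ - trProj (sHess φ x₀ t₀) η ≤ g x₀)

/-- Signed stationary subsolution property. -/
def SSub {n : ℕ} (σ : ℝ) (g : EE n → ℝ) (v : EE n → ℝ) : Prop :=
  ∀ φ : EE n → ℝ, ContDiff ℝ 2 φ →
    ∀ x₀ : EE n, IsLocalMax (fun x => v x - φ x) x₀ →
      (gradient φ x₀ ≠ 0 →
        -(trProj (hess φ x₀) (‖gradient φ x₀‖⁻¹ • gradient φ x₀) + σ * ‖gradient φ x₀‖) ≤ g x₀) ∧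
      (gradient φ x₀ = 0 →
        ∃ η : EE n, ‖η‖ ≤ 1 ∧ -(trProj (hess φ x₀) η) ≤ g x₀)

lemma my_gradient_neg {n : ℕ} (φ : EE n → ℝ) (x : EE n) :
    gradient (fun y => - φ y) x = - gradient φ x := by
  simp [gradient, fderiv_fun_neg]

lemma my_hess_neg {n : ℕ} (φ : EE n → ℝ) (x : EE n) :
    fderiv ℝ (fun y => gradient (fun z => - φ z) y) x = - fderiv ℝ (fun y => gradient φ y) x := by
  have : (fun y => gradient (fun z => - φ z) y) = fun y => - gradient φ y := by
    funext y; exact my_gradient_neg φ y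
  rw [this, fderiv_fun_neg]

lemma trProj_neg {n : ℕ} (A : EE n →L[ℝ] EE n) (η : EE n) : trProj (-A) η = - trProj A η := by
  simp [trProj, clmTrace, inner_neg_left]; ring

lemma trProj_neg_right {n : ℕ} (A : EE n →L[ℝ] EE n) (η : EE n) : trProj A (-η) = trProj A η := by
  simp [trProj]

lemma PSub_of_sub {n : ℕ} {f : EE n → ℝ} {u : EE n → ℝ → ℝ} (h : ParabSubsol f Set.univ u) :
    PSub 1 f u := by
  intro φ hφ x₀ t₀ ht hm
  have := h φ hφ x₀ (mem_univ _) t₀ ht hm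
  simpa only [one_mul] using this

lemma PSub_of_super {n : ℕ} {f : EE n → ℝ} {u : EE n → ℝ → ℝ} (h : ParabSupersol f Set.univ u) :
    PSub (-1) (fun x => - f x) (fun x t => - u x t) := by
  intro φ hφ x₀ t₀ ht hm
  have hm' : IsLocalMin (fun p : EE n × ℝ => u p.1 p.2 - (- φ p.1 p.2)) (x₀, t₀) := by
    refine Filter.Eventually.mono hm (fun p hp => ?_)
    simp only at hp ⊢
    linarith
  have := h (fun x t => - φ x t) hφ.neg x₀ (mem_univ _) t₀ ht hm'
  have e1 : sGrad (fun x t => - φ x t) x₀ t₀ = - sGrad φ x₀ t₀ := my_gradient_neg _ _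
  have e2 : sHess (fun x t => - φ x t) x₀ t₀ = - sHess φ x₀ t₀ := my_hess_neg _ _
  have e3 : tDeriv (fun x t => - φ x t) x₀ t₀ = - tDeriv φ x₀ t₀ := by simp [tDeriv]
  rw [e1, e2, e3] at this
  simp only [norm_neg, smul_neg, trProj_neg, trProj_neg_right, ne_eq, neg_eq_zero] at this
  refine ⟨fun h1 => ?_, fun h1 => ?_⟩
  · have := this.1 h1
    linarith
  · obtain ⟨η, h2, h3⟩ := this.2 h1
    exact ⟨η, h2, by linarith⟩

lemma sub_of_SSub {n : ℕ} {f : EE n → ℝ} {v : EE n → ℝ} (h : SSub 1 f v) :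
    StatSubsol f Set.univ v := by
  intro φ hφ x₀ _ hm
  have := h φ hφ x₀ hm
  simpa only [one_mul] using this

lemma super_of_SSub {n : ℕ} {f : EE n → ℝ} {v : EE n → ℝ}
    (h : SSub (-1) (fun x => - f x) (fun x => - v x)) :
    StatSupersol f Set.univ v := by
  intro φ hφ x₀ _ hm
  have hm' : IsLocalMax (fun x => - v x - (- φ x)) x₀ := by
    refine Filter.Eventually.mono hm (fun p hp => ?_)
    simp only at hp ⊢
    linarith
  have := h (fun x => - φ x) hφ.neg x₀ hm'
  have e1 : gradient (fun x => - φ x) x₀ = - gradient φ x₀ := my_gradient_neg _ _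
  have e2 : hess (fun x => - φ x) x₀ = - hess φ x₀ := my_hess_neg _ _
  rw [e1, e2] at this
  simp only [norm_neg, smul_neg, trProj_neg, trProj_neg_right, ne_eq, neg_eq_zero] at this
  refine ⟨fun h1 => ?_, fun h1 => ?_⟩
  · have := this.1 h1
    linarith
  · obtain ⟨η, h2, h3⟩ := this.2 h1
    exact ⟨η, h2, by linarith⟩

/-- gradient of the quartic test function -/
lemma quart_grad {n : ℕ} (k ρ C : ℝ) (x : EE n) :
    gradient (fun y : EE n => k * (‖y‖ ^ 2 - ρ ^ 2) ^ 4 + C) x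
      = (8 * k * (‖x‖ ^ 2 - ρ ^ 2) ^ 3) • x := by
  apply HasGradientAt.gradient
  rw [hasGradientAt_iff_hasFDerivAt]
  have h := (hasStrictFDerivAt_norm_sq x).hasFDerivAt
  have h2 := ((((h.sub_const (ρ ^ 2)).pow 4).const_mul k).add_const C)
  refine HasFDerivAt.congr_fderiv h2 ?_
  ext y
  simp [inner_smul_left]
  ring

lemma quart_hess {n : ℕ} (k ρ : ℝ) (x : EE n) :
    fderiv ℝ (fun y : EE n => (8 * k * (‖y‖ ^ 2 - ρ ^ 2) ^ 3) • y) x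
      = (8 * k * (‖x‖ ^ 2 - ρ ^ 2) ^ 3) • ContinuousLinearMap.id ℝ (EE n)
        + (48 * k * (‖x‖ ^ 2 - ρ ^ 2) ^ 2) • (innerSL ℝ x).smulRight x := by
  apply HasFDerivAt.fderiv
  have h := (hasStrictFDerivAt_norm_sq x).hasFDerivAt
  have h2 := ((((h.sub_const (ρ ^ 2)).pow 3).const_mul (8 * k))).smul (hasFDerivAt_id x)
  refine HasFDerivAt.congr_fderiv h2 ?_
  ext y
  simp
  ring

lemma quart_trProj {n : ℕ} (α β : ℝ) (x η : EE n) :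
    trProj (α • ContinuousLinearMap.id ℝ (EE n) + β • (innerSL ℝ x).smulRight x) η
      = α * (n - ‖η‖ ^ 2) + β * (‖x‖ ^ 2 - ⟪x, η⟫ ^ 2) := by
  have h1 : clmTrace (α • ContinuousLinearMap.id ℝ (EE n) + β • (innerSL ℝ x).smulRight x)
      = α * n + β * ‖x‖ ^ 2 := by
    have e : (α • ContinuousLinearMap.id ℝ (EE n) + β • (innerSL ℝ x).smulRight x).toLinearMap
       = α • LinearMap.id + β • ((innerSL ℝ x).toLinearMap.smulRight x) := by
      ext y; simp
    simp only [clmTrace]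
    rw [e]
    rw [map_add, map_smul, map_smul, LinearMap.trace_smulRight, LinearMap.trace_id]
    simp
  rw [trProj, h1]
  simp [inner_add_left, inner_smul_left]
  ring

lemma PSub_quart {n : ℕ} {σ : ℝ} {g : EE n → ℝ} {u : EE n → ℝ → ℝ} (hu : PSub σ g u)
    (k ρ : ℝ) (hk : 0 < k) (h : ℝ → ℝ) (hh : ContDiff ℝ 2 h) (x : EE n) (hx : x ≠ 0)
    (t : ℝ) (ht : 0 < t)
    (hm : IsLocalMax (fun p : EE n × ℝ => u p.1 p.2 - (k * (‖p.1‖ ^ 2 - ρ ^ 2) ^ 4 + h p.2)) (x, t)) :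
    deriv h t - (((n : ℝ) - 1) * (8 * k * (‖x‖ ^ 2 - ρ ^ 2) ^ 3)
      + σ * (|8 * k * (‖x‖ ^ 2 - ρ ^ 2) ^ 3| * ‖x‖)) ≤ g x := by
  have hC : ContDiff ℝ 2 (fun p : EE n × ℝ => k * (‖p.1‖ ^ 2 - ρ ^ 2) ^ 4 + h p.2) := by
    have : ContDiff ℝ 2 (fun p : EE n × ℝ => ‖p.1‖ ^ 2) := contDiff_fst.norm_sq ℝ
    exact (contDiff_const.mul ((this.sub contDiff_const).pow 4)).add (hh.comp contDiff_snd)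
  have := hu (fun x t => k * (‖x‖ ^ 2 - ρ ^ 2) ^ 4 + h t) hC x t ht hm
  have e1 : sGrad (fun x t => k * (‖x‖ ^ 2 - ρ ^ 2) ^ 4 + h t) x t
      = (8 * k * (‖x‖ ^ 2 - ρ ^ 2) ^ 3) • x := quart_grad k ρ (h t) x
  have e2 : sHess (fun x t => k * (‖x‖ ^ 2 - ρ ^ 2) ^ 4 + h t) x t
      = (8 * k * (‖x‖ ^ 2 - ρ ^ 2) ^ 3) • ContinuousLinearMap.id ℝ (EE n)
        + (48 * k * (‖x‖ ^ 2 - ρ ^ 2) ^ 2) • (innerSL ℝ x).smulRight x := by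
    rw [← quart_hess]
    simp only [sHess]
    congr 1
    funext y
    exact quart_grad k ρ (h t) y
  have e3 : tDeriv (fun (x : EE n) t => k * (‖x‖ ^ 2 - ρ ^ 2) ^ 4 + h t) x t = deriv h t := by
    simp [tDeriv]
  rw [e1, e2, e3] at this
  have hxn : 0 < ‖x‖ := norm_pos_iff.mpr hx
  by_cases hq : ‖x‖ ^ 2 - ρ ^ 2 = 0
  · have h0 : (8 * k * (‖x‖ ^ 2 - ρ ^ 2) ^ 3) • x = 0 := by simp [hq]
    obtain ⟨η, _, h3⟩ := this.2 h0
    rw [quart_trProj, hq] at h3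
    rw [hq]
    simpa using h3
  · have hne : 8 * k * (‖x‖ ^ 2 - ρ ^ 2) ^ 3 ≠ 0 := by positivity
    have h3 := this.1 (smul_ne_zero hne hx)
    set e := 8 * k * (‖x‖ ^ 2 - ρ ^ 2) ^ 3 with he
    rw [quart_trProj, norm_smul, norm_smul, norm_inv, inner_smul_right,
      inner_smul_right, real_inner_self_eq_norm_sq] at h3
    have ha : ‖e‖ = |e| := rfl
    have hapos : 0 < |e| := abs_pos.mpr hne
    rw [norm_mul, norm_norm, norm_norm, ha] at h3
    have s1 : (|e| * ‖x‖)⁻¹ * (|e| * ‖x‖) = 1 := inv_mul_cancel₀ (by positivity)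
    have s2 : ((|e| * ‖x‖)⁻¹ * (e * ‖x‖ ^ 2)) ^ 2 = ‖x‖ ^ 2 := by
      have : e ^ 2 = |e| ^ 2 := (sq_abs e).symm
      field_simp
      rw [this]
    rw [s1, s2] at h3
    have : e * ((n:ℝ) - 1 ^ 2) + 48 * k * (‖x‖ ^ 2 - ρ ^ 2) ^ 2 * (‖x‖ ^ 2 - ‖x‖ ^ 2)
      = ((n : ℝ) - 1) * e := by ring
    rw [this] at h3
    exact h3
/-- Radial first-order subsolution property (signed). -/
def RadSub {n : ℕ} (σ : ℝ) (g : ℝ → ℝ) (U : EE n → ℝ → ℝ) : Prop :=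
  ∀ x₀ : EE n, x₀ ≠ 0 → ∀ t₀ : ℝ, 0 < t₀ → ∀ a a' h : ℝ → ℝ, ContDiff ℝ 2 h →
    (∀ᶠ r in 𝓝 ‖x₀‖, HasDerivAt a (a' r) r) → ContinuousAt a' ‖x₀‖ →
    (∃ η > 0, ∀ (x : EE n) (t : ℝ), |‖x‖ - ‖x₀‖| < η → |t - t₀| < η →
      U x t - a ‖x‖ - h t ≤ U x₀ t₀ - a ‖x₀‖ - h t₀) →
    deriv h t₀ - (((n : ℝ) - 1) / ‖x₀‖ * a' ‖x₀‖ + σ * |a' ‖x₀‖|) ≤ g ‖x₀‖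

lemma annulus_compact {n : ℕ} (lo hi : ℝ) : IsCompact {x : EE n | lo ≤ ‖x‖ ∧ ‖x‖ ≤ hi} := by
  have h1 : IsCompact (Metric.closedBall (0 : EE n) hi) := isCompact_closedBall 0 hi
  have h2 : IsClosed {x : EE n | lo ≤ ‖x‖} := isClosed_le continuous_const continuous_norm
  convert h1.inter_right h2 using 1
  ext x; simp [and_comm]

lemma RadSub_of_PSub {n : ℕ} {σ : ℝ} {g : ℝ → ℝ} {u : EE n → ℝ → ℝ}
    (hu : PSub σ (fun x => g ‖x‖) u)
    (hc : ContinuousOn (fun p : EE n × ℝ => u p.1 p.2) (Set.univ ×ˢ Set.Ici 0))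
    (hg : ContinuousOn g (Ioi 0)) : RadSub σ g u := by
  intro x₀ hx₀ t₀ ht₀ a a' h hh ha ha' ⟨η₀, hη₀, hmax⟩
  set r₀ := ‖x₀‖ with hr₀
  have hr₀pos : 0 < r₀ := norm_pos_iff.mpr hx₀
  obtain ⟨ε, hε, hεa⟩ := Metric.eventually_nhds_iff.1 ha
  set η := min (min ε η₀) (min r₀ t₀) / 2 with hη
  have hm1 : min (min ε η₀) (min r₀ t₀) ≤ ε := (min_le_left _ _).trans (min_le_left _ _)
  have hm2 : min (min ε η₀) (min r₀ t₀) ≤ η₀ := (min_le_left _ _).trans (min_le_right _ _)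
  have hm3 : min (min ε η₀) (min r₀ t₀) ≤ r₀ := (min_le_right _ _).trans (min_le_left _ _)
  have hm4 : min (min ε η₀) (min r₀ t₀) ≤ t₀ := (min_le_right _ _).trans (min_le_right _ _)
  have hm0 : 0 < min (min ε η₀) (min r₀ t₀) := by positivity
  have hηpos : 0 < η := by positivity
  have hηε : η < ε := by linarith
  have hηη : η < η₀ := by linarith
  have hηr : η < r₀ := by linarith
  have hηt : η < t₀ := by linarith
  have haD : ∀ r ∈ Icc (r₀ - η) (r₀ + η), HasDerivAt a (a' r) r := by
    intro r hr
    apply hεa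
    rw [Real.dist_eq, abs_lt]
    constructor <;> linarith [hr.1, hr.2]
  set S : Set (EE n) := {x : EE n | r₀ - η ≤ ‖x‖ ∧ ‖x‖ ≤ r₀ + η} with hS
  set C : Set (EE n × ℝ × ℝ) := S ×ˢ Icc (t₀ - η) (t₀ + η) ×ˢ Icc (r₀ - η) (r₀ + η) with hC
  have hCc : IsCompact C := (annulus_compact _ _).prod (isCompact_Icc.prod isCompact_Icc)
  set G : EE n × ℝ × ℝ → ℝ := fun z => u z.1 z.2.1 - a z.2.2 - h z.2.1 - (z.2.2 - r₀) ^ 2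
    - (z.2.1 - t₀) ^ 2 with hG
  set q : EE n × ℝ × ℝ → ℝ := fun z => ‖z.1‖ ^ 2 - z.2.2 ^ 2 with hq
  have hqc : Continuous q := by fun_prop
  have hhc : Continuous h := hh.continuous
  have hGc : ContinuousOn G C := by
    have c1 : ContinuousOn (fun z : EE n × ℝ × ℝ => u z.1 z.2.1) C := by
      refine hc.comp (f := fun z : EE n × ℝ × ℝ => (z.1, z.2.1)) (by fun_prop) ?_
      intro z hz
      have := hz.2.1.1
      refine ⟨mem_univ _, ?_⟩
      simp only [mem_Ici]; linarith
    have c2 : ContinuousOn (fun z : EE n × ℝ × ℝ => a z.2.2) C := by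
      have : ContinuousOn a (Icc (r₀ - η) (r₀ + η)) :=
        fun r hr => (haD r hr).continuousAt.continuousWithinAt
      exact this.comp (f := fun z : EE n × ℝ × ℝ => z.2.2) (by fun_prop) (fun z hz => hz.2.2)
    have c3 : Continuous (fun z : EE n × ℝ × ℝ => h z.2.1) := by fun_prop
    exact (((c1.sub c2).sub c3.continuousOn).sub (by fun_prop)).sub (by fun_prop)
  have hx₀C : (x₀, t₀, r₀) ∈ C := by
    refine ⟨⟨?_, ?_⟩, ⟨?_, ?_⟩, ⟨?_, ?_⟩⟩ <;> simp only <;> linarith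
  have hex : ∀ k : ℕ, ∃ z ∈ C, ∀ y ∈ C, G y - (k + 1 : ℝ) * q y ^ 4 ≤ G z - (k + 1 : ℝ) * q z ^ 4 := by
    intro k
    have : ContinuousOn (fun z => G z - (k + 1 : ℝ) * q z ^ 4) C :=
      hGc.sub (by fun_prop)
    obtain ⟨z, hz, hzm⟩ := hCc.exists_isMaxOn ⟨_, hx₀C⟩ this
    exact ⟨z, hz, fun y hy => hzm hy⟩
  choose z hzC hzm using hex
  obtain ⟨zs, hzs, ψ, hψ, hlim⟩ := hCc.tendsto_subseq hzC
  obtain ⟨M, hM⟩ := (hCc.image_of_continuousOn hGc).bddAbove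
  have hM' : ∀ y ∈ C, G y ≤ M := fun y hy => hM ⟨y, hy, rfl⟩
  set m0 := u x₀ t₀ - a r₀ - h t₀ with hm0def
  have hG0 : G (x₀, t₀, r₀) = m0 := by simp [hG, hm0def]
  have hq0 : q (x₀, t₀, r₀) = 0 := by simp [hq, hr₀]
  have hge : ∀ k, m0 ≤ G (z k) - (k + 1 : ℝ) * q (z k) ^ 4 := by
    intro k
    have := hzm k _ hx₀C
    rw [hG0, hq0] at this
    simpa using this
  have hq1 : ∀ k, q (z k) ^ 4 ≤ (M - m0) / (k + 1 : ℝ) := by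
    intro k
    rw [le_div_iff₀ (by positivity)]
    have := hge k
    have := hM' _ (hzC k)
    linarith
  have hql : Tendsto (fun j => q (z (ψ j)) ^ 4) atTop (𝓝 (q zs ^ 4)) :=
    ((hqc.pow 4).tendsto zs).comp hlim
  have hqz : q zs = 0 := by
    have h0 : Tendsto (fun k : ℕ => (M - m0) / ((k : ℝ) + 1)) atTop (𝓝 0) := by
      have := tendsto_one_div_add_atTop_nhds_zero_nat (𝕜 := ℝ)
      have := this.const_mul (M - m0)
      simpa [div_eq_mul_inv] using this
    have h1 := le_of_tendsto_of_tendsto' hql (h0.comp hψ.tendsto_atTop) (fun j => hq1 (ψ j))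
    have h2 : q zs ^ 4 = 0 := le_antisymm h1 (by positivity)
    exact pow_eq_zero_iff (by norm_num) |>.1 h2
  have hGl : Tendsto (fun j => G (z (ψ j))) atTop (𝓝 (G zs)) := by
    have := hGc zs hzs
    exact this.tendsto.comp (tendsto_nhdsWithin_iff.2 ⟨hlim, Eventually.of_forall fun j => hzC _⟩)
  have hGz : m0 ≤ G zs := by
    refine ge_of_tendsto' hGl (fun j => ?_)
    have := hge (ψ j)
    have h4 : 0 ≤ (((ψ j : ℕ) : ℝ) + 1) * q (z (ψ j)) ^ 4 := by positivity
    linarith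
  obtain ⟨xs, ts, ρs⟩ := zs
  have hρs : ‖xs‖ = ρs := by
    have h1 : ‖xs‖ ^ 2 = ρs ^ 2 := by
      have : ‖xs‖ ^ 2 - ρs ^ 2 = 0 := hqz
      linarith
    have h2 : 0 ≤ ρs := by have := hzs.2.2.1; simp only at this; linarith
    exact (sq_eq_sq₀ (norm_nonneg _) h2).1 h1
  have hfin := hmax xs ts (by
      have h1 := hzs.1.1; have h2 := hzs.1.2
      simp only at h1 h2
      rw [abs_lt]; constructor <;> linarith) (by
      have h1 := hzs.2.1.1; have h2 := hzs.2.1.2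
      simp only at h1 h2
      rw [abs_lt]; constructor <;> linarith)
  have hGz' : m0 ≤ u xs ts - a ρs - h ts - (ρs - r₀) ^ 2 - (ts - t₀) ^ 2 := hGz
  rw [hρs] at hfin
  have hρ0 : ρs = r₀ := by
    have : (ρs - r₀) ^ 2 = 0 := by nlinarith [sq_nonneg (ρs - r₀), sq_nonneg (ts - t₀)]
    have := pow_eq_zero_iff (n := 2) (by norm_num) |>.1 this
    linarith
  have ht0 : ts = t₀ := by
    have : (ts - t₀) ^ 2 = 0 := by nlinarith [sq_nonneg (ρs - r₀), sq_nonneg (ts - t₀)]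
    have := pow_eq_zero_iff (n := 2) (by norm_num) |>.1 this
    linarith
  rw [hρ0] at hρs hlim
  rw [ht0] at hlim
  have lx : Tendsto (fun j => ‖(z (ψ j)).1‖) atTop (𝓝 r₀) := by
    have := ((continuous_norm.comp continuous_fst).tendsto (xs, t₀, r₀)).comp hlim
    simpa [Function.comp_def, hρs] using this
  have lt : Tendsto (fun j => (z (ψ j)).2.1) atTop (𝓝 t₀) := by
    have := ((continuous_fst.comp continuous_snd).tendsto (xs, t₀, r₀)).comp hlim
    simpa [Function.comp_def] using this
  have lρ : Tendsto (fun j => (z (ψ j)).2.2) atTop (𝓝 r₀) := by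
    have := ((continuous_snd.comp continuous_snd).tendsto (xs, t₀, r₀)).comp hlim
    simpa [Function.comp_def] using this
  have hdh : ∀ t, HasDerivAt (fun t => h t + (t - t₀) ^ 2) (deriv h t + 2 * (t - t₀)) t := by
    intro t
    have h1 : HasDerivAt h (deriv h t) t := (hh.differentiable (by norm_num) t).hasDerivAt
    have h2 := ((hasDerivAt_id t).sub_const t₀).pow 2
    refine (h1.add h2).congr_deriv ?_
    simp
  have hev : ∀ᶠ j in atTop, deriv h (z (ψ j)).2.1 + 2 * ((z (ψ j)).2.1 - t₀)
      - (((n : ℝ) - 1) * ((a' (z (ψ j)).2.2 + 2 * ((z (ψ j)).2.2 - r₀)) / (z (ψ j)).2.2)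
        + σ * (|(a' (z (ψ j)).2.2 + 2 * ((z (ψ j)).2.2 - r₀)) / (z (ψ j)).2.2| * ‖(z (ψ j)).1‖))
      ≤ g ‖(z (ψ j)).1‖ := by
    have e1 := lx.eventually (Metric.ball_mem_nhds r₀ hηpos)
    have e2 := lt.eventually (Metric.ball_mem_nhds t₀ hηpos)
    have e3 := lρ.eventually (Metric.ball_mem_nhds r₀ hηpos)
    filter_upwards [e1, e2, e3] with j h1 h2 h3
    have hmj := hzm (ψ j)
    set k : ℝ := ((ψ j : ℕ) : ℝ) + 1 with hk
    have hkpos : 0 < k := by positivity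
    generalize z (ψ j) = zz at h1 h2 h3 hmj ⊢
    obtain ⟨x, t, ρ⟩ := zz
    simp only [Metric.mem_ball, Real.dist_eq] at h1 h2 h3
    simp only
    rw [abs_lt] at h1 h2 h3
    have hxne : x ≠ 0 := by
      rw [← norm_pos_iff]; linarith
    have htpos : 0 < t := by linarith
    have hρpos : 0 < ρ := by linarith
    have hloc : IsLocalMax (fun p : EE n × ℝ => u p.1 p.2 -
        (k * (‖p.1‖ ^ 2 - ρ ^ 2) ^ 4 + (h p.2 + (p.2 - t₀) ^ 2))) (x, t) := by
      have o1 : ∀ᶠ p : EE n × ℝ in 𝓝 (x, t), ‖p.1‖ ∈ Ioo (r₀ - η) (r₀ + η) := by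
        have : Continuous (fun p : EE n × ℝ => ‖p.1‖) := by fun_prop
        exact this.continuousAt.eventually (Ioo_mem_nhds (by simp only; linarith) (by simp only; linarith))
      have o2 : ∀ᶠ p : EE n × ℝ in 𝓝 (x, t), p.2 ∈ Ioo (t₀ - η) (t₀ + η) := by
        have : Continuous (fun p : EE n × ℝ => p.2) := by fun_prop
        exact this.continuousAt.eventually (Ioo_mem_nhds (by simp only; linarith) (by simp only; linarith))
      filter_upwards [o1, o2] with p p1 p2
      have := hmj (p.1, p.2, ρ) ⟨⟨p1.1.le, p1.2.le⟩, ⟨p2.1.le, p2.2.le⟩, ⟨by simp only; linarith, by simp only; linarith⟩⟩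
      simp only [hG, hq] at this
      linarith
    have hC2 : ContDiff ℝ 2 (fun t => h t + (t - t₀) ^ 2) :=
      hh.add ((contDiff_id.sub contDiff_const).pow 2)
    have hmain := PSub_quart hu k ρ hkpos _ hC2 x hxne t htpos hloc
    rw [(hdh t).deriv] at hmain
    have hst : a' ρ + 2 * (ρ - r₀) = 8 * k * (‖x‖ ^ 2 - ρ ^ 2) ^ 3 * ρ := by
      have d1 : HasDerivAt (fun s => - a s - (s - r₀) ^ 2 - k * (‖x‖ ^ 2 - s ^ 2) ^ 4)
          (- a' ρ - 2 * (ρ - r₀) + 8 * k * (‖x‖ ^ 2 - ρ ^ 2) ^ 3 * ρ) ρ := by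
        have b1 := (haD ρ ⟨by linarith, by linarith⟩).neg
        have b2 := ((hasDerivAt_id ρ).sub_const r₀).pow 2
        have b3 := ((((hasDerivAt_id ρ).pow 2).const_sub (‖x‖ ^ 2)).pow 4).const_mul k
        have := (b1.sub b2).sub b3
        refine this.congr_deriv ?_
        simp
        ring
      have hl : IsLocalMax (fun s => - a s - (s - r₀) ^ 2 - k * (‖x‖ ^ 2 - s ^ 2) ^ 4) ρ := by
        have : ∀ᶠ s in 𝓝 ρ, s ∈ Ioo (r₀ - η) (r₀ + η) := Ioo_mem_nhds (by linarith) (by linarith)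
        filter_upwards [this] with s hs
        have := hmj (x, t, s) ⟨⟨by simp only; linarith, by simp only; linarith⟩, ⟨by simp only; linarith, by simp only; linarith⟩, ⟨hs.1.le, hs.2.le⟩⟩
        simp only [hG, hq] at this
        linarith
      have := hl.hasDerivAt_eq_zero d1
      linarith
    rw [hst, mul_div_assoc, div_self hρpos.ne', mul_one]
    exact hmain
  have hdc : Continuous (deriv h) := hh.continuous_deriv (by norm_num)
  have la : Tendsto (fun j => a' (z (ψ j)).2.2) atTop (𝓝 (a' r₀)) := ha'.tendsto.comp lρ
  have le : Tendsto (fun j => (a' (z (ψ j)).2.2 + 2 * ((z (ψ j)).2.2 - r₀)) / (z (ψ j)).2.2) atTop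
      (𝓝 ((a' r₀ + 2 * (r₀ - r₀)) / r₀)) :=
    (la.add ((lρ.sub_const r₀).const_mul 2)).div lρ hr₀pos.ne'
  have lhs := (((hdc.tendsto t₀).comp lt).add ((lt.sub_const t₀).const_mul 2)).sub
    ((le.const_mul ((n : ℝ) - 1)).add ((le.abs.mul lx).const_mul σ))
  have lg : Tendsto (fun j => g ‖(z (ψ j)).1‖) atTop (𝓝 (g r₀)) :=
    ((hg.continuousAt (Ioi_mem_nhds hr₀pos)).tendsto).comp lx
  have := le_of_tendsto_of_tendsto lhs lg hev
  have e : |(a' r₀ + 2 * (r₀ - r₀)) / r₀| * r₀ = |a' r₀| := by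
    rw [sub_self, mul_zero, add_zero, abs_div, abs_of_pos hr₀pos, div_mul_cancel₀ _ hr₀pos.ne']
  rw [e] at this
  simp only [sub_self, mul_zero, add_zero] at this
  have e2 : ((n : ℝ) - 1) / r₀ * a' r₀ = ((n : ℝ) - 1) * (a' r₀ / r₀) := by ring
  rw [e2]
  exact this

lemma RadSub_smooth {n : ℕ} {σ : ℝ} {g : ℝ → ℝ} (Y Y' : ℝ → ℝ)
    (hY : ∀ r > 0, HasDerivAt Y (Y' r) r)
    (hG : ∀ r > 0, -(((n : ℝ) - 1) / r * Y' r + σ * |Y' r|) ≤ g r) :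
    RadSub σ g (fun (x : EE n) (_ : ℝ) => Y ‖x‖) := by
  intro x₀ hx₀ t₀ ht₀ a a' h hh ha ha' ⟨η, hη, hmax⟩
  have hr : 0 < ‖x₀‖ := norm_pos_iff.mpr hx₀
  have h1 : deriv h t₀ = 0 := by
    have : IsLocalMin h t₀ := by
      filter_upwards [Metric.ball_mem_nhds t₀ hη] with t ht
      have := hmax x₀ t (by simpa using hη) (by simpa [Real.dist_eq] using ht)
      linarith
    exact this.deriv_eq_zero
  have h2 : a' ‖x₀‖ = Y' ‖x₀‖ := by
    have : IsLocalMax (fun r => Y r - a r) ‖x₀‖ := by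
      filter_upwards [Metric.ball_mem_nhds _ hη, Ioi_mem_nhds hr] with r hr1 hr2
      have hr2' : 0 < r := hr2
      have hn : ‖(r / ‖x₀‖) • x₀‖ = r := by
        rw [norm_smul, Real.norm_eq_abs, abs_of_pos (by positivity)]
        field_simp
      have := hmax ((r / ‖x₀‖) • x₀) t₀ (by rw [hn]; simpa [Real.dist_eq] using hr1) (by simpa using hη)
      simp only [hn] at this ⊢
      linarith
    have := this.hasDerivAt_eq_zero ((hY _ hr).sub ha.self_of_nhds)
    linarith
  rw [h1, h2]
  have := hG _ hr
  linarith

lemma RadSub_shift {n : ℕ} {σ : ℝ} {g : ℝ → ℝ} {U : EE n → ℝ → ℝ} (hU : RadSub σ g U) (s : ℝ)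
    (hs : 0 ≤ s) : RadSub σ g (fun x t => U x (s + t)) := by
  intro x₀ hx₀ t₀ ht₀ a a' h hh ha ha' ⟨η, hη, hmax⟩
  have := hU x₀ hx₀ (s + t₀) (by linarith) a a' (fun t => h (t - s))
    (hh.comp (contDiff_id.sub contDiff_const)) ha ha' ⟨η, hη, ?_⟩
  · rw [deriv_comp_sub_const] at this
    simpa using this
  · intro x t h1 h2
    have := hmax x (t - s) h1 (by convert h2 using 2; ring)
    simpa using this

lemma RadSub_scale {n : ℕ} {σ : ℝ} {g : ℝ → ℝ} {U : EE n → ℝ → ℝ} (hU : RadSub σ g U) (θ : ℝ)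
    (hθ : 0 < θ) : RadSub σ (fun r => θ * g r) (fun x t => θ * U x t) := by
  intro x₀ hx₀ t₀ ht₀ a a' h hh ha ha' ⟨η, hη, hmax⟩
  have := hU x₀ hx₀ t₀ ht₀ (fun r => θ⁻¹ * a r) (fun r => θ⁻¹ * a' r) (fun t => θ⁻¹ * h t)
    (contDiff_const.mul hh) (ha.mono fun r hr => hr.const_mul _) (ha'.const_mul _) ⟨η, hη, ?_⟩
  · rw [deriv_const_mul_field, abs_mul, abs_of_pos (inv_pos.mpr hθ)] at this
    have := mul_le_mul_of_nonneg_left this hθ.le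
    refine le_trans (le_of_eq ?_) this
    field_simp
  · intro x t h1 h2
    have := hmax x t h1 h2
    have := mul_le_mul_of_nonneg_left this (inv_pos.mpr hθ).le
    have e : ∀ y s, θ⁻¹ * (θ * U y s - a ‖y‖ - h s) = U y s - θ⁻¹ * a ‖y‖ - θ⁻¹ * h s := by
      intro y s; field_simp
    rw [e, e] at this
    exact this

lemma RadSub_drift {n : ℕ} {σ : ℝ} {g : ℝ → ℝ} {U : EE n → ℝ → ℝ} (hU : RadSub σ g U) (c : ℝ) :
    RadSub σ (fun r => g r - c) (fun x t => U x t - c * t) := by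
  intro x₀ hx₀ t₀ ht₀ a a' h hh ha ha' ⟨η, hη, hmax⟩
  have := hU x₀ hx₀ t₀ ht₀ a a' (fun t => h t + c * t)
    (hh.add (contDiff_const.mul contDiff_id)) ha ha' ⟨η, hη, ?_⟩
  · have e : deriv (fun t => h t + c * t) t₀ = deriv h t₀ + c := by
      have h1 : HasDerivAt h (deriv h t₀) t₀ := (hh.differentiable (by norm_num) t₀).hasDerivAt
      have h2 : HasDerivAt (fun t => h t + c * t) (deriv h t₀ + c) t₀ := by
        refine (h1.add ((hasDerivAt_id t₀).const_mul c)).congr_deriv ?_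
        simp
      exact h2.deriv
    rw [e] at this
    linarith
  · intro x t h1 h2
    have := hmax x t h1 h2
    linarith
lemma pen_bound (N r : ℝ) (hN : 1 ≤ N) (hr : 0 < r) :
    N / r * (1 - (r ^ 2)⁻¹) + |1 - (r ^ 2)⁻¹| ≤ N + 2 := by
  set y := r⁻¹ with hy
  have hy0 : 0 < y := inv_pos.mpr hr
  have e : (r ^ 2)⁻¹ = y ^ 2 := by rw [hy, inv_pow]
  rw [e, div_eq_mul_inv, ← hy]
  rcases le_total y 1 with h | h
  · have h2 : y ^ 2 ≤ 1 := by nlinarith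
    rw [abs_of_nonneg (by linarith)]
    have : N * y * (1 - y ^ 2) ≤ N * 1 := by
      rw [mul_assoc]
      apply mul_le_mul_of_nonneg_left _ (by linarith)
      nlinarith [pow_pos hy0 3]
    nlinarith
  · have h2 : 1 ≤ y ^ 2 := by nlinarith
    rw [abs_of_nonpos (by linarith)]
    have : 0 ≤ (y ^ 2 - 1) * (N * y - 1) := by
      apply mul_nonneg (by linarith); nlinarith
    nlinarith

lemma core_ineq (N K L C δ r r' : ℝ) (g : ℝ → ℝ) (hN : 1 ≤ N) (hK : 0 ≤ K) (hKL : 2 * L ≤ K)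
    (hC0 : 0 ≤ C) (hδ : 0 < δ) (hr : 0 < r) (hr' : 0 < r') (hC : |g r - g r'| ≤ C * |r - r'|)
    (hL : |g r - g r'| ≤ L * N * |r - r'| / (r * r')) :
    g r - g r' + N * (K * (r - r') / √((r - r') ^ 2 + δ ^ 2)) * (r⁻¹ - r'⁻¹) ≤ C * δ := by
  set d := r - r' with hd
  set q := √(d ^ 2 + δ ^ 2) with hq
  have hqpos : 0 < q := Real.sqrt_pos.mpr (by positivity)
  have hqsq : q ^ 2 = d ^ 2 + δ ^ 2 := Real.sq_sqrt (by positivity)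
  have e : N * (K * d / q) * (r⁻¹ - r'⁻¹) = - (N * K * (d ^ 2 / q) / (r * r')) := by
    have : r⁻¹ - r'⁻¹ = - d / (r * r') := by rw [hd]; field_simp; ring
    rw [this]; ring
  rw [e]
  have hg := le_abs_self (g r - g r')
  rcases le_total δ |d| with h | h
  · have h1 : |d| / 2 ≤ d ^ 2 / q := by
      rw [div_le_div_iff₀ (by norm_num) hqpos]
      have hq2 : q ≤ 2 * |d| := by
        apply abs_le_of_sq_le_sq' _ (by positivity) |>.2
        rw [hqsq, mul_pow, sq_abs]
        have : δ ^ 2 ≤ d ^ 2 := by rw [← sq_abs d]; exact pow_le_pow_left₀ hδ.le h 2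
        nlinarith [sq_nonneg d]
      have : |d| * q ≤ |d| * (2 * |d|) := mul_le_mul_of_nonneg_left hq2 (abs_nonneg _)
      rw [← sq_abs d]; linarith
    have h2 : L * N * |d| / (r * r') ≤ N * K * (d ^ 2 / q) / (r * r') := by
      apply div_le_div_of_nonneg_right _ (by positivity)
      have h3 : N * K * (|d| / 2) ≤ N * K * (d ^ 2 / q) :=
        mul_le_mul_of_nonneg_left h1 (by positivity)
      have h4 : 0 ≤ N * |d| * (K - 2 * L) := by
        apply mul_nonneg (by positivity); linarith
      linarith
    have : 0 ≤ C * δ := by positivity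
    linarith
  · have h1 : 0 ≤ N * K * (d ^ 2 / q) / (r * r') := by positivity
    have := mul_le_mul_of_nonneg_left h hC0
    linarith

lemma hasDerivAt_root (r' δ r : ℝ) (hδ : 0 < δ) :
    HasDerivAt (fun r => √((r - r') ^ 2 + δ ^ 2)) ((r - r') / √((r - r') ^ 2 + δ ^ 2)) r := by
  have h1 : HasDerivAt (fun r => (r - r') ^ 2 + δ ^ 2) (2 * (r - r')) r := by
    refine (((hasDerivAt_id r).sub_const r').pow 2).add_const (δ ^ 2) |>.congr_deriv ?_
    simp
  refine (h1.sqrt (by positivity)).congr_deriv ?_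
  rw [mul_div_mul_left _ _ (by norm_num)]

lemma hasDerivAt_pen (μ r : ℝ) (hr : 0 < r) :
    HasDerivAt (fun r => μ * (r + r⁻¹)) (μ * (1 - (r ^ 2)⁻¹)) r := by
  refine (((hasDerivAt_id r).add (hasDerivAt_inv hr.ne')).const_mul μ).congr_deriv ?_
  ring

lemma cont_root (r' δ r : ℝ) (hδ : 0 < δ) :
    ContinuousAt (fun r => (r - r') / √((r - r') ^ 2 + δ ^ 2)) r := by
  apply ContinuousAt.div (by fun_prop) (by fun_prop)
  exact (Real.sqrt_pos.mpr (by positivity)).ne'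

lemma cont_pen (μ r : ℝ) (hr : 0 < r) :
    ContinuousAt (fun r : ℝ => μ * (1 - (r ^ 2)⁻¹)) r := by
  have : ContinuousAt (fun r : ℝ => (r ^ 2)⁻¹) r := by
    apply ContinuousAt.inv₀ (by fun_prop); positivity
  exact (continuousAt_const.sub this).const_mul μ

set_option maxHeartbeats 1000000 in
/-- Final contradiction at an interior maximum point. -/
lemma DE_core {n : ℕ} (hn : 2 ≤ n) {g g2 X X' : ℝ → ℝ} {U V : EE n → ℝ → ℝ}
    (hU : RadSub 1 g U) (hV : RadSub (-1) (fun r => - g2 r) (fun x t => - V x t))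
    {T m K L C δ ν β μ γ S : ℝ}
    (hK : 0 ≤ K) (hKL : 2 * L ≤ K) (hC0 : 0 ≤ C) (hδ : 0 < δ) (hμ : 0 ≤ μ)
    (hγ : 0 ≤ γ) (hS : 0 ≤ S)
    (hC : ∀ r r', 0 < r → 0 < r' → |g r - g r'| ≤ C * |r - r'|)
    (hL : ∀ r r', 0 < r → 0 < r' → |g r - g r'| ≤ L * ((n : ℝ) - 1) * |r - r'| / (r * r'))
    (hX : ∀ r > 0, HasDerivAt X (X' r) r) (hX' : ∀ r > 0, ContinuousAt X' r)
    {x₁ y₁ : EE n} {t₁ s₁ : ℝ} (hx₁ : x₁ ≠ 0) (hy₁ : y₁ ≠ 0)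
    (ht : 0 < t₁) (hs : 0 < s₁) (ht' : t₁ < T + 1) (hs' : s₁ < T + 1)
    (hGB : g ‖y₁‖ + m ≤ -(((n : ℝ) - 1) / ‖y₁‖ * X' ‖y₁‖ + |X' ‖y₁‖|) + g2 ‖y₁‖)
    (hmax : ∀ x y : EE n, x ≠ 0 → y ≠ 0 → ∀ t ∈ Icc 0 (T + 1), ∀ s ∈ Icc 0 (T + 1),
      U x t - V y s - X ‖y‖ - K * √((‖x‖ - ‖y‖) ^ 2 + δ ^ 2) + m * t - ν * t
        - (t - s) ^ 2 / β - μ * (‖x‖ + ‖x‖⁻¹) - μ * (‖y‖ + ‖y‖⁻¹)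
        - γ * Real.exp (S * (t - T)) - γ * Real.exp (S * (s - T)) ≤
      U x₁ t₁ - V y₁ s₁ - X ‖y₁‖ - K * √((‖x₁‖ - ‖y₁‖) ^ 2 + δ ^ 2) + m * t₁ - ν * t₁
        - (t₁ - s₁) ^ 2 / β - μ * (‖x₁‖ + ‖x₁‖⁻¹) - μ * (‖y₁‖ + ‖y₁‖⁻¹)
        - γ * Real.exp (S * (t₁ - T)) - γ * Real.exp (S * (s₁ - T))) :
    ν ≤ C * δ + 2 * μ * ((n : ℝ) - 1 + 2) := by
  have hr : 0 < ‖x₁‖ := norm_pos_iff.mpr hx₁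
  have hr' : 0 < ‖y₁‖ := norm_pos_iff.mpr hy₁
  have hN : (1 : ℝ) ≤ (n : ℝ) - 1 := by
    have : (2 : ℝ) ≤ n := by exact_mod_cast hn
    linarith
  set N : ℝ := (n : ℝ) - 1 with hNdef
  set r := ‖x₁‖ with hrdef
  set r' := ‖y₁‖ with hrdef'
  have hexp : ∀ t, HasDerivAt (fun t => γ * Real.exp (S * (t - T))) (γ * (Real.exp (S * (t - T)) * S)) t := by
    intro t
    have h1 : HasDerivAt (fun t => S * (t - T)) S t := by
      refine (((hasDerivAt_id t).sub_const T).const_mul S).congr_deriv ?_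
      simp
    exact h1.exp.const_mul γ
  have hexpC : ContDiff ℝ 2 (fun t => γ * Real.exp (S * (t - T))) :=
    contDiff_const.mul (contDiff_const.mul (contDiff_id.sub contDiff_const)).exp
  -- first test
  have A := hU x₁ hx₁ t₁ ht (fun ρ => K * √((ρ - r') ^ 2 + δ ^ 2) + μ * (ρ + ρ⁻¹))
    (fun ρ => K * ((ρ - r') / √((ρ - r') ^ 2 + δ ^ 2)) + μ * (1 - (ρ ^ 2)⁻¹))
    (fun t => (ν - m) * t + (t - s₁) ^ 2 / β + γ * Real.exp (S * (t - T)))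
    (((contDiff_const.mul contDiff_id).add
      (((contDiff_id.sub contDiff_const).pow 2).div_const β)).add hexpC)
    (by
      filter_upwards [Ioi_mem_nhds hr] with ρ hρ
      exact ((hasDerivAt_root r' δ ρ hδ).const_mul K).add (hasDerivAt_pen μ ρ hρ))
    (((cont_root r' δ _ hδ).const_mul K).add (cont_pen μ _ hr))
    (by
      refine ⟨min r (min t₁ (T + 1 - t₁)), by
        have : 0 < T + 1 - t₁ := by linarith
        positivity, ?_⟩
      intro x t h1 h2
      have h3 := lt_of_lt_of_le h1 (min_le_left _ _)
      have h4 := lt_of_lt_of_le h2 ((min_le_right _ _).trans (min_le_left _ _))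
      have h5 := lt_of_lt_of_le h2 ((min_le_right _ _).trans (min_le_right _ _))
      rw [abs_lt] at h3 h4 h5
      have hx : x ≠ 0 := by rw [← norm_pos_iff]; linarith
      have := hmax x y₁ hx hy₁ t ⟨by linarith, by linarith⟩ s₁ ⟨hs.le, hs'.le⟩
      linarith)
  have B := hV y₁ hy₁ s₁ hs (fun ρ => X ρ + (K * √((ρ - r) ^ 2 + δ ^ 2) + μ * (ρ + ρ⁻¹)))
    (fun ρ => X' ρ + (K * ((ρ - r) / √((ρ - r) ^ 2 + δ ^ 2)) + μ * (1 - (ρ ^ 2)⁻¹)))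
    (fun s => (s - t₁) ^ 2 / β + γ * Real.exp (S * (s - T)))
    ((((contDiff_id.sub contDiff_const).pow 2).div_const β).add hexpC)
    (by
      filter_upwards [Ioi_mem_nhds hr'] with ρ hρ
      exact (hX ρ hρ).add (((hasDerivAt_root r δ ρ hδ).const_mul K).add (hasDerivAt_pen μ ρ hρ)))
    ((hX' _ hr').add (((cont_root r δ _ hδ).const_mul K).add (cont_pen μ _ hr')))
    (by
      refine ⟨min r' (min s₁ (T + 1 - s₁)), by
        have : 0 < T + 1 - s₁ := by linarith
        positivity, ?_⟩
      intro y s h1 h2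
      have h3 := lt_of_lt_of_le h1 (min_le_left _ _)
      have h4 := lt_of_lt_of_le h2 ((min_le_right _ _).trans (min_le_left _ _))
      have h5 := lt_of_lt_of_le h2 ((min_le_right _ _).trans (min_le_right _ _))
      rw [abs_lt] at h3 h4 h5
      have hy : y ≠ 0 := by rw [← norm_pos_iff]; linarith
      have := hmax x₁ y hx₁ hy t₁ ⟨ht.le, ht'.le⟩ s ⟨by linarith, by linarith⟩
      simp only
      have e1 : ∀ a : ℝ, (a - r) ^ 2 = (r - a) ^ 2 := fun a => by ring
      have e2 : ∀ a : ℝ, (a - t₁) ^ 2 = (t₁ - a) ^ 2 := fun a => by ring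
      rw [e1, e1, e2, e2]
      linarith)
  have dA : deriv (fun t => (ν - m) * t + (t - s₁) ^ 2 / β + γ * Real.exp (S * (t - T))) t₁
      = (ν - m) + 2 * (t₁ - s₁) / β + γ * (Real.exp (S * (t₁ - T)) * S) := by
    apply HasDerivAt.deriv
    have h1 := (hasDerivAt_id t₁).const_mul (ν - m)
    have h2 := (((hasDerivAt_id t₁).sub_const s₁).pow 2).div_const β
    refine ((h1.add h2).add (hexp t₁)).congr_deriv ?_
    simp
  have dB : deriv (fun s => (s - t₁) ^ 2 / β + γ * Real.exp (S * (s - T))) s₁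
      = 2 * (s₁ - t₁) / β + γ * (Real.exp (S * (s₁ - T)) * S) := by
    apply HasDerivAt.deriv
    have h2 := (((hasDerivAt_id s₁).sub_const t₁).pow 2).div_const β
    refine (h2.add (hexp s₁)).congr_deriv ?_
    simp
  rw [dA] at A
  rw [dB] at B
  simp only [← hrdef, ← hrdef', ← hNdef] at A B
  have hcore := core_ineq N K L C δ r r' g hN hK hKL hC0 hδ hr hr' (hC r r' hr hr') (hL r r' hr hr')
  have p1 := pen_bound N r hN hr
  have p2 := pen_bound N r' hN hr'
  have eq1 : (r' - r) ^ 2 = (r - r') ^ 2 := by ring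
  rw [eq1] at B
  set P := K * ((r - r') / √((r - r') ^ 2 + δ ^ 2)) with hP
  have eP : K * ((r' - r) / √((r - r') ^ 2 + δ ^ 2)) = - P := by rw [hP]; ring
  have eP2 : K * (r - r') / √((r - r') ^ 2 + δ ^ 2) = P := by rw [hP]; ring
  rw [eP] at B
  rw [eP2] at hcore
  set e := 1 - (r ^ 2)⁻¹ with he
  set e' := 1 - (r' ^ 2)⁻¹ with he'
  have ab1 : |P + μ * e| ≤ |P| + μ * |e| := by
    refine (abs_add_le _ _).trans ?_
    rw [abs_mul μ, abs_of_nonneg hμ]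
  have ab2 : |P| - |X' r'| - μ * |e'| ≤ |X' r' + (-P + μ * e')| := by
    have h1 : |P| ≤ |X' r' + (-P + μ * e')| + |X' r'| + |μ * e'| := by
      have : P = -(X' r' + (-P + μ * e')) + X' r' + μ * e' := by ring
      calc |P| = |-(X' r' + (-P + μ * e')) + X' r' + μ * e'| := by rw [← this]
        _ ≤ _ := by
          refine (abs_add_le _ _).trans ?_
          gcongr
          refine (abs_add_le _ _).trans ?_
          rw [abs_neg]
    rw [abs_mul μ, abs_of_nonneg hμ] at h1
    linarith
  have E1 : 0 ≤ γ * (Real.exp (S * (t₁ - T)) * S) := by positivity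
  have E2 : 0 ≤ γ * (Real.exp (S * (s₁ - T)) * S) := by positivity
  have hm1 := mul_le_mul_of_nonneg_left p1 hμ
  have hm2 := mul_le_mul_of_nonneg_left p2 hμ
  have z1 : 2 * (s₁ - t₁) / β = - (2 * (t₁ - s₁) / β) := by ring
  rw [z1] at B
  have z2 : N * P * (r⁻¹ - r'⁻¹) = N / r * P - N / r' * P := by ring
  rw [z2] at hcore
  have z3 : N / r * (P + μ * e) = N / r * P + μ * (N / r * e) := by ring
  have z4 : N / r' * (X' r' + (-P + μ * e')) = N / r' * X' r' - N / r' * P + μ * (N / r' * e') := by ring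
  rw [z3] at A
  rw [z4] at B
  clear hmax hU hV hC hL hX hX' hexp hexpC dA dB z1 z2 z3 z4 eP eP2 eq1 p1 p2
  clear_value P e e'
  generalize N / r * P = q1 at *
  generalize N / r' * P = q2 at *
  generalize N / r * e = q3 at *
  generalize N / r' * e' = q4 at *
  generalize N / r' * X' r' = q5 at *
  linarith
/-- uniform continuity in time on a strip -/
def TimeUC {n : ℕ} (U : EE n → ℝ → ℝ) (T : ℝ) : Prop :=
  ∀ ν > 0, ∃ τ > 0, ∀ x, ∀ t ∈ Icc 0 T, ∀ s ∈ Icc 0 T, |t - s| < τ → |U x t - U x s| < ν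

set_option maxHeartbeats 1000000 in
theorem DE {n : ℕ} (hn : 2 ≤ n) {g g2 X X' : ℝ → ℝ} {U V : EE n → ℝ → ℝ}
    (hU : RadSub 1 g U) (hV : RadSub (-1) (fun r => - g2 r) (fun x t => - V x t))
    (hUc : ContinuousOn (fun p : EE n × ℝ => U p.1 p.2) (Set.univ ×ˢ Set.Ici 0))
    (hVc : ContinuousOn (fun p : EE n × ℝ => V p.1 p.2) (Set.univ ×ˢ Set.Ici 0))
    {T m K L C E Z M1 : ℝ} {B : Set ℝ} (hT : 0 ≤ T)
    (hUM : ∀ x, ∀ t ∈ Icc 0 (T + 1), U x t ≤ M1) (hVM : ∀ x, ∀ t ∈ Icc 0 (T + 1), - V x t ≤ M1)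
    (hUt : TimeUC U (T + 1)) (hVt : TimeUC V (T + 1))
    (hK : 0 ≤ K) (hKL : 2 * L ≤ K) (hC0 : 0 ≤ C)
    (hC : ∀ r r', 0 < r → 0 < r' → |g r - g r'| ≤ C * |r - r'|)
    (hL : ∀ r r', 0 < r → 0 < r' → |g r - g r'| ≤ L * ((n : ℝ) - 1) * |r - r'| / (r * r'))
    (hX : ∀ r > 0, HasDerivAt X (X' r) r) (hX' : ∀ r > 0, ContinuousAt X' r)
    (hX0 : ∀ r > 0, 0 ≤ X r)
    (hGB : ∀ r > 0, r ∉ B → g r + m ≤ -(((n : ℝ) - 1) / r * X' r + |X' r|) + g2 r)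
    (hZ : 0 ≤ Z) (hZm : m * (T + 1) ≤ Z)
    (hinit : ∀ x y : EE n, x ≠ 0 → y ≠ 0 → U x 0 - V y 0 - X ‖y‖ ≤ E + K * |‖x‖ - ‖y‖| + Z)
    (hB : ∀ t ∈ Icc 0 (T + 1), ∀ x y : EE n, x ≠ 0 → y ≠ 0 → ‖y‖ ∈ B →
      U x t - V y t - X ‖y‖ ≤ E + K * |‖x‖ - ‖y‖|) :
    ∀ t ∈ Icc 0 T, ∀ x y : EE n, x ≠ 0 → y ≠ 0 →
      U x t - V y t - X ‖y‖ ≤ E + K * |‖x‖ - ‖y‖| + Z - m * t := by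
  intro t₀ ht₀ x₀ y₀ hx₀ hy₀
  by_contra hcon
  push Not at hcon
  obtain ⟨D, hD⟩ : ∃ z, z = U x₀ t₀ - V y₀ t₀ - X ‖y₀‖ - (E + K * |‖x₀‖ - ‖y₀‖| + Z - m * t₀) := ⟨_, rfl⟩
  have hDpos : 0 < D := by linarith
  obtain ⟨ν, hν⟩ : ∃ z, z = D / (8 * (T + 1)) := ⟨_, rfl⟩
  have hνpos : 0 < ν := by rw [hν]; positivity
  have hN : (1 : ℝ) ≤ (n : ℝ) - 1 := by
    have : (2 : ℝ) ≤ n := by exact_mod_cast hn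
    linarith
  obtain ⟨δ, hδ, hδK, hδC⟩ : ∃ δ > 0, K * δ ≤ D / 8 ∧ C * δ ≤ ν / 3 := by
    refine ⟨min (D / (8 * (K + 1))) (ν / (3 * (C + 1))), by positivity, ?_, ?_⟩
    · calc K * min (D / (8 * (K + 1))) (ν / (3 * (C + 1))) ≤ (K + 1) * (D / (8 * (K + 1))) := by
            apply mul_le_mul (by linarith) (min_le_left _ _) (by positivity) (by positivity)
        _ = D / 8 := by field_simp
    · calc C * min (D / (8 * (K + 1))) (ν / (3 * (C + 1))) ≤ (C + 1) * (ν / (3 * (C + 1))) := by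
            apply mul_le_mul (by linarith) (min_le_right _ _) (by positivity) (by positivity)
        _ = ν / 3 := by field_simp
  obtain ⟨Q, hQ⟩ : ∃ z, z = (‖x₀‖ + ‖x₀‖⁻¹) + (‖y₀‖ + ‖y₀‖⁻¹) := ⟨_, rfl⟩
  have hQ0 : 0 ≤ Q := by rw [hQ]; positivity
  obtain ⟨μ, hμ, hμQ, hμN⟩ : ∃ μ > 0, μ * Q ≤ D / 8 ∧ 2 * μ * ((n : ℝ) - 1 + 2) ≤ ν / 3 := by
    refine ⟨min (D / (8 * (Q + 1))) (ν / (6 * ((n : ℝ) - 1 + 2))), by positivity, ?_, ?_⟩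
    · calc min (D / (8 * (Q + 1))) (ν / (6 * ((n : ℝ) - 1 + 2))) * Q ≤ (D / (8 * (Q + 1))) * (Q + 1) := by
            apply mul_le_mul (min_le_left _ _) (by linarith) (by positivity) (by positivity)
        _ = D / 8 := by field_simp
    · calc 2 * min (D / (8 * (Q + 1))) (ν / (6 * ((n : ℝ) - 1 + 2))) * ((n : ℝ) - 1 + 2)
          ≤ 2 * (ν / (6 * ((n : ℝ) - 1 + 2))) * ((n : ℝ) - 1 + 2) := by
            gcongr
            exact min_le_right _ _
        _ = ν / 3 := by
            have : ((n : ℝ) - 1 + 2) ≠ 0 := by positivity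
            field_simp; norm_num
  obtain ⟨τ1, hτ1, hτ1'⟩ := hUt (D / 8) (by positivity)
  obtain ⟨τ2, hτ2, hτ2'⟩ := hVt (D / 8) (by positivity)
  obtain ⟨τ, hτ, hτa, hτb, hτm⟩ : ∃ τ > 0, τ ≤ τ1 ∧ τ ≤ τ2 ∧ |m| * τ ≤ D / 8 := by
    refine ⟨min (min τ1 τ2) (D / (8 * (|m| + 1))), by positivity, (min_le_left _ _).trans (min_le_left _ _),
      (min_le_left _ _).trans (min_le_right _ _), ?_⟩
    calc |m| * min (min τ1 τ2) (D / (8 * (|m| + 1))) ≤ (|m| + 1) * (D / (8 * (|m| + 1))) := by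
            apply mul_le_mul (by linarith) (min_le_right _ _) (by positivity) (by positivity)
        _ = D / 8 := by field_simp
  obtain ⟨Ms, hMs⟩ : ∃ z, z = |2 * M1 + |m| * (T + 1) - E - Z| + 1 := ⟨_, rfl⟩
  have hMspos : 0 < Ms := by rw [hMs]; positivity
  have hMs1 : 2 * M1 + |m| * (T + 1) - E - Z < Ms := by
    have := le_abs_self (2 * M1 + |m| * (T + 1) - E - Z); linarith
  obtain ⟨β, hβ⟩ : ∃ z, z = τ ^ 2 / Ms := ⟨_, rfl⟩
  have hβpos : 0 < β := by rw [hβ]; positivity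
  obtain ⟨γ, hγ⟩ : ∃ z, z = D / 16 := ⟨_, rfl⟩
  have hγpos : 0 < γ := by rw [hγ]; positivity
  obtain ⟨S, hS⟩ : ∃ z, z = Ms / γ := ⟨_, rfl⟩
  have hSpos : 0 < S := by rw [hS]; positivity
  have hγS : Ms < γ * Real.exp S := by
    have h1 := Real.add_one_le_exp S
    have h2 : γ * S = Ms := by rw [hS]; field_simp
    have := mul_le_mul_of_nonneg_left h1 hγpos.le
    rw [mul_add, h2] at this
    linarith
  obtain ⟨F, hF⟩ : ∃ F : EE n → EE n → ℝ → ℝ → ℝ, F = fun x y t s =>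
      U x t - V y s - X ‖y‖ - K * √((‖x‖ - ‖y‖) ^ 2 + δ ^ 2) + m * t - ν * t
        - (t - s) ^ 2 / β - μ * (‖x‖ + ‖x‖⁻¹) - μ * (‖y‖ + ‖y‖⁻¹)
        - γ * Real.exp (S * (t - T)) - γ * Real.exp (S * (s - T)) := ⟨_, rfl⟩
  have habs : ∀ d : ℝ, |d| ≤ √(d ^ 2 + δ ^ 2) := by
    intro d
    apply Real.le_sqrt_of_sq_le
    rw [sq_abs]; nlinarith [sq_nonneg δ]
  have habs' : ∀ d : ℝ, √(d ^ 2 + δ ^ 2) ≤ |d| + δ := by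
    intro d
    apply Real.sqrt_le_iff.2 ⟨by positivity, ?_⟩
    nlinarith [sq_abs d, abs_nonneg d]
  have hmt : ∀ t ∈ Icc 0 (T + 1), m * t ≤ |m| * (T + 1) := by
    intro t ht
    calc m * t ≤ |m| * t := mul_le_mul_of_nonneg_right (le_abs_self m) ht.1
      _ ≤ _ := mul_le_mul_of_nonneg_left ht.2 (abs_nonneg m)
  have hF0 : E + Z + D / 2 ≤ F x₀ y₀ t₀ t₀ := by
    simp only [hF]
    have h1 := mul_le_mul_of_nonneg_left (habs' (‖x₀‖ - ‖y₀‖)) hK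
    have h2 : ν * t₀ ≤ D / 8 := by
      calc ν * t₀ ≤ ν * (T + 1) := by
            apply mul_le_mul_of_nonneg_left _ hνpos.le; linarith [ht₀.2]
        _ = D / 8 := by rw [hν]; field_simp
    have h3 : Real.exp (S * (t₀ - T)) ≤ 1 := by
      rw [Real.exp_le_one_iff]
      apply mul_nonpos_of_nonneg_of_nonpos hSpos.le; linarith [ht₀.2]
    have h4 := mul_le_mul_of_nonneg_left h3 hγpos.le
    have h5 : μ * (‖x₀‖ + ‖x₀‖⁻¹) + μ * (‖y₀‖ + ‖y₀‖⁻¹) = μ * Q := by rw [hQ]; ring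
    rw [sub_self]
    norm_num
    rw [mul_add] at h1
    linarith
  have hup : ∀ x y, ∀ t ∈ Icc 0 (T + 1), ∀ s ∈ Icc 0 (T + 1), y ≠ 0 → F x y t s ≤ E + Z + Ms
      - (t - s) ^ 2 / β - μ * (‖x‖ + ‖x‖⁻¹) - μ * (‖y‖ + ‖y‖⁻¹)
        - γ * Real.exp (S * (t - T)) - γ * Real.exp (S * (s - T)) := by
    intro x y t ht s hs hy
    simp only [hF]
    have h1 := hUM x t ht
    have h2 := hVM y s hs
    have h3 := hX0 ‖y‖ (norm_pos_iff.mpr hy)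
    have h4 := hmt t ht
    have h5 : 0 ≤ K * √((‖x‖ - ‖y‖) ^ 2 + δ ^ 2) := by positivity
    have h6 : 0 ≤ ν * t := mul_nonneg hνpos.le ht.1
    linarith
  obtain ⟨H, hH⟩ : ∃ z, z = max (Ms / μ) Q + 1 := ⟨_, rfl⟩
  have hHpos : 0 < H := by rw [hH]; positivity
  set A : Set (EE n) := {x : EE n | H⁻¹ ≤ ‖x‖ ∧ ‖x‖ ≤ H} with hA
  have hA0 : ∀ x ∈ A, x ≠ 0 := by
    intro x hx
    rw [← norm_pos_iff]
    exact lt_of_lt_of_le (inv_pos.mpr hHpos) hx.1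
  have hAin : ∀ x : EE n, x ≠ 0 → μ * (‖x‖ + ‖x‖⁻¹) ≤ Ms → x ∈ A := by
    intro x hx h
    have hxp : 0 < ‖x‖ := norm_pos_iff.mpr hx
    have h1 : ‖x‖ + ‖x‖⁻¹ ≤ Ms / μ := by
      rw [le_div_iff₀ hμ]; linarith
    have h2 : Ms / μ ≤ H := by rw [hH]; linarith [le_max_left (Ms / μ) Q]
    have h3 : 0 < ‖x‖⁻¹ := inv_pos.mpr hxp
    refine ⟨?_, by linarith⟩
    rw [inv_le_comm₀ hHpos hxp]; linarith
  set Bx : Set (EE n × EE n × ℝ × ℝ) := A ×ˢ A ×ˢ Icc 0 (T + 1) ×ˢ Icc 0 (T + 1) with hBx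
  have hBc : IsCompact Bx :=
    (annulus_compact _ _).prod ((annulus_compact _ _).prod (isCompact_Icc.prod isCompact_Icc))
  have hbig : ∀ x y, x ≠ 0 → y ≠ 0 → ∀ t ∈ Icc 0 (T + 1), ∀ s ∈ Icc 0 (T + 1), E + Z + D / 2 ≤ F x y t s →
      (x, y, t, s) ∈ Bx := by
    intro x y hx hy t ht s hs h
    have h1 := hup x y t ht s hs hy
    have h2 : 0 ≤ (t - s) ^ 2 / β := by positivity
    have h3 : 0 ≤ μ * (‖x‖ + ‖x‖⁻¹) := by positivity
    have h4 : 0 ≤ μ * (‖y‖ + ‖y‖⁻¹) := by positivity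
    have h5 : 0 ≤ γ * Real.exp (S * (t - T)) := by positivity
    have h6 : 0 ≤ γ * Real.exp (S * (s - T)) := by positivity
    exact ⟨hAin x hx (by linarith), hAin y hy (by linarith), ht, hs⟩
  have ht₀' : t₀ ∈ Icc 0 (T + 1) := ⟨ht₀.1, by linarith [ht₀.2]⟩
  have hne : (x₀, y₀, t₀, t₀) ∈ Bx := hbig x₀ y₀ hx₀ hy₀ t₀ ht₀' t₀ ht₀' hF0
  have hcont : ContinuousOn (fun z : EE n × EE n × ℝ × ℝ => F z.1 z.2.1 z.2.2.1 z.2.2.2) Bx := by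
    have c1 : ContinuousOn (fun z : EE n × EE n × ℝ × ℝ => U z.1 z.2.2.1) Bx :=
      hUc.comp (f := fun z : EE n × EE n × ℝ × ℝ => (z.1, z.2.2.1)) (by fun_prop)
        (fun z hz => ⟨mem_univ _, hz.2.2.1.1⟩)
    have c2 : ContinuousOn (fun z : EE n × EE n × ℝ × ℝ => V z.2.1 z.2.2.2) Bx :=
      hVc.comp (f := fun z : EE n × EE n × ℝ × ℝ => (z.2.1, z.2.2.2)) (by fun_prop)
        (fun z hz => ⟨mem_univ _, hz.2.2.2.1⟩)
    have c3 : ContinuousOn (fun z : EE n × EE n × ℝ × ℝ => X ‖z.2.1‖) Bx := by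
      have : ContinuousOn X (Ioi 0) := fun r hr => (hX r hr).continuousAt.continuousWithinAt
      exact this.comp (f := fun z : EE n × EE n × ℝ × ℝ => ‖z.2.1‖) (by fun_prop)
        (fun z hz => norm_pos_iff.mpr (hA0 _ hz.2.1))
    have c4 : ContinuousOn (fun z : EE n × EE n × ℝ × ℝ => ‖z.1‖⁻¹) Bx :=
      ContinuousOn.inv₀ (by fun_prop) (fun z hz => (norm_pos_iff.mpr (hA0 _ hz.1)).ne')
    have c5 : ContinuousOn (fun z : EE n × EE n × ℝ × ℝ => ‖z.2.1‖⁻¹) Bx :=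
      ContinuousOn.inv₀ (by fun_prop) (fun z hz => (norm_pos_iff.mpr (hA0 _ hz.2.1)).ne')
    simp only [hF]
    have c6 : ContinuousOn (fun z : EE n × EE n × ℝ × ℝ => ‖z.1‖ + ‖z.1‖⁻¹) Bx :=
      ContinuousOn.add (by fun_prop) c4
    have c7 : ContinuousOn (fun z : EE n × EE n × ℝ × ℝ => ‖z.2.1‖ + ‖z.2.1‖⁻¹) Bx :=
      ContinuousOn.add (by fun_prop) c5
    refine ((((((((((c1.sub c2).sub c3).sub ?_).add ?_).sub ?_).sub ?_).sub
      (c6.const_mul μ)).sub (c7.const_mul μ)).sub ?_).sub ?_)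
    all_goals fun_prop
  obtain ⟨z, hz, hzm⟩ := hBc.exists_isMaxOn ⟨_, hne⟩ hcont
  obtain ⟨x₁, y₁, t₁, s₁⟩ := z
  have hF1 : E + Z + D / 2 ≤ F x₁ y₁ t₁ s₁ := hF0.trans (hzm hne)
  have hx₁ : x₁ ≠ 0 := hA0 _ hz.1
  have hy₁ : y₁ ≠ 0 := hA0 _ hz.2.1
  have ht₁ : t₁ ∈ Icc 0 (T + 1) := hz.2.2.1
  have hs₁ : s₁ ∈ Icc 0 (T + 1) := hz.2.2.2
  have hmax : ∀ x y : EE n, x ≠ 0 → y ≠ 0 → ∀ t ∈ Icc 0 (T + 1), ∀ s ∈ Icc 0 (T + 1),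
      F x y t s ≤ F x₁ y₁ t₁ s₁ := by
    intro x y hx hy t ht s hs
    by_cases h : E + Z + D / 2 ≤ F x y t s
    · exact hzm (hbig x y hx hy t ht s hs h)
    · linarith
  have h1 := hup x₁ y₁ t₁ ht₁ s₁ hs₁ hy₁
  have p2 : 0 ≤ (t₁ - s₁) ^ 2 / β := by positivity
  have p3 : 0 ≤ μ * (‖x₁‖ + ‖x₁‖⁻¹) := by positivity
  have p4 : 0 ≤ μ * (‖y₁‖ + ‖y₁‖⁻¹) := by positivity
  have p5 : 0 ≤ γ * Real.exp (S * (t₁ - T)) := by positivity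
  have p6 : 0 ≤ γ * Real.exp (S * (s₁ - T)) := by positivity
  have p7 : 0 ≤ ν * t₁ := mul_nonneg hνpos.le ht₁.1
  have ht₁' : t₁ < T + 1 := by
    rcases lt_or_eq_of_le ht₁.2 with h | h
    · exact h
    · exfalso
      have : S * (t₁ - T) = S := by rw [h]; ring
      rw [this] at h1
      linarith
  have hs₁' : s₁ < T + 1 := by
    rcases lt_or_eq_of_le hs₁.2 with h | h
    · exact h
    · exfalso
      have : S * (s₁ - T) = S := by rw [h]; ring
      rw [this] at h1
      linarith
  have hts : |t₁ - s₁| < τ := by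
    have h2 : (t₁ - s₁) ^ 2 / β < Ms := by linarith
    rw [div_lt_iff₀ hβpos, hβ, mul_div_cancel₀ _ hMspos.ne'] at h2
    exact abs_lt_of_sq_lt_sq h2 hτ.le
  have hroot : K * |‖x₁‖ - ‖y₁‖| ≤ K * √((‖x₁‖ - ‖y₁‖) ^ 2 + δ ^ 2) :=
    mul_le_mul_of_nonneg_left (habs _) hK
  have hVts := hτ2' y₁ t₁ ht₁ s₁ hs₁ (hts.trans_le hτb)
  have hF1' := hF1
  simp only [hF] at hF1'
  have ht₁pos : 0 < t₁ := by
    rcases lt_or_eq_of_le ht₁.1 with h | h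
    · exact h
    · exfalso
      subst h
      have := hinit x₁ y₁ hx₁ hy₁
      rw [abs_lt] at hVts
      linarith
  have hs₁pos : 0 < s₁ := by
    rcases lt_or_eq_of_le hs₁.1 with h | h
    · exact h
    · exfalso
      subst h
      have := hinit x₁ y₁ hx₁ hy₁
      have hUts := hτ1' x₁ t₁ ht₁ 0 hs₁ (hts.trans_le hτa)
      rw [abs_lt] at hUts
      have : m * t₁ ≤ D / 8 := by
        have h3 : t₁ ≤ τ := by
          rw [sub_zero, abs_lt] at hts; exact hts.2.le
        calc m * t₁ ≤ |m| * t₁ := mul_le_mul_of_nonneg_right (le_abs_self m) ht₁.1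
          _ ≤ |m| * τ := mul_le_mul_of_nonneg_left h3 (abs_nonneg m)
          _ ≤ _ := hτm
      linarith
  have hyB : ‖y₁‖ ∉ B := by
    intro hyB
    have := hB t₁ ht₁ x₁ y₁ hx₁ hy₁ hyB
    rw [abs_lt] at hVts
    have h3 : m * t₁ ≤ Z := by
      rcases le_total 0 m with h | h
      · exact (mul_le_mul_of_nonneg_left ht₁.2 h).trans hZm
      · exact (mul_nonpos_of_nonpos_of_nonneg h ht₁.1).trans hZ
    linarith
  simp only [hF] at hmax
  have := DE_core hn hU hV (T := T) (m := m) (K := K) (L := L) (C := C) (δ := δ) (ν := ν) (β := β) (μ := μ)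
    (γ := γ) (S := S) hK hKL hC0 hδ hμ.le hγpos.le hSpos.le hC hL hX hX' hx₁ hy₁ ht₁pos hs₁pos ht₁' hs₁'
    (hGB _ (norm_pos_iff.mpr hy₁) hyB) hmax
  linarith
lemma f_lip {f : ℝ → ℝ} {R : ℝ} (hf : ContDiffOn ℝ 1 f (Ici 0)) (hR : 0 < R)
    (hs : ∀ r ≥ R, f r = 0) :
    ∃ C ≥ 0, ∀ r r', 0 ≤ r → 0 ≤ r' → |f r - f r'| ≤ C * |min r R - min r' R| := by
  have h1 : ContinuousOn (derivWithin f (Ici 0)) (Ici 0) :=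
    hf.continuousOn_derivWithin (uniqueDiffOn_Ici 0) (by norm_num)
  obtain ⟨C, hC⟩ := (isCompact_Icc (a := (0 : ℝ)) (b := R)).exists_bound_of_continuousOn
    (h1.mono Icc_subset_Ici_self)
  have h2 : ∀ x ∈ Icc 0 R, HasDerivWithinAt f (derivWithin f (Ici 0) x) (Icc 0 R) x := fun x hx =>
    ((hf.differentiableOn (by norm_num) x hx.1).hasDerivWithinAt).mono Icc_subset_Ici_self
  have hC0 : 0 ≤ C := (norm_nonneg _).trans (hC 0 ⟨le_rfl, hR.le⟩)
  refine ⟨C, hC0, ?_⟩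
  have hmin : ∀ r, 0 ≤ r → f r = f (min r R) := by
    intro r hr
    rcases le_total r R with h | h
    · rw [min_eq_left h]
    · rw [min_eq_right h, hs r h, hs R le_rfl]
  intro r r' hr hr'
  rw [hmin r hr, hmin r' hr']
  have := (convex_Icc 0 R).norm_image_sub_le_of_norm_hasDerivWithin_le (f := f) h2 hC
    (x := min r' R) (y := min r R) ⟨le_min hr' hR.le, min_le_right _ _⟩ ⟨le_min hr hR.le, min_le_right _ _⟩
  simpa [Real.norm_eq_abs] using this

lemma min_diff (R r r' : ℝ) (hr : 0 < r) (hr' : 0 < r') (hR : 0 < R) :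
    |min r R - min r' R| ≤ R ^ 2 * (|r - r'| / (r * r')) := by
  wlog h : r ≤ r' generalizing r r' with H
  · have := H r' r hr' hr (le_of_not_ge h)
    rw [abs_sub_comm, abs_sub_comm r, mul_comm r]; exact this
  have h1 : min r R ≤ min r' R := min_le_min_right R h
  rw [abs_sub_comm, abs_of_nonneg (by linarith), abs_sub_comm, abs_of_nonneg (by linarith)]
  rw [← mul_div_assoc, le_div_iff₀ (by positivity)]
  rcases le_total r R with ha | ha
  · rw [min_eq_left ha]
    rcases le_total r' R with hb | hb
    · rw [min_eq_left hb]
      have : r * r' ≤ R ^ 2 := by nlinarith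
      nlinarith [mul_le_mul_of_nonneg_left this (sub_nonneg.2 h)]
    · rw [min_eq_right hb]
      have e1 : 0 ≤ R * (R - r) * (r' - R) := by
        apply mul_nonneg (mul_nonneg hR.le (by linarith)) (by linarith)
      have e2 : 0 ≤ (R - r) * (R - r) * r' := by positivity
      nlinarith [mul_nonneg (mul_nonneg hR.le hr.le) (sub_nonneg.2 hb), mul_nonneg hR.le (sub_nonneg.2 hb)]
  · rw [min_eq_right ha, min_eq_right (ha.trans h), sub_self, zero_mul]
    have := sub_nonneg.2 h
    positivity

lemma f_facts {f : ℝ → ℝ} {N : ℝ} (hN : 1 ≤ N) (hf : ContDiffOn ℝ 1 f (Ici 0))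
    (hs : ∃ R > 0, ∀ r ≥ R, f r = 0) :
    ∃ C L, 0 ≤ C ∧ 0 ≤ L ∧ (∀ r r', 0 ≤ r → 0 ≤ r' → |f r - f r'| ≤ C * |r - r'|) ∧
      (∀ r r', 0 < r → 0 < r' → |f r - f r'| ≤ L * N * |r - r'| / (r * r')) := by
  obtain ⟨R, hR, hs⟩ := hs
  obtain ⟨C, hC0, hC⟩ := f_lip hf hR hs
  refine ⟨C, C * R ^ 2, hC0, by positivity, fun r r' hr hr' => (hC r r' hr hr').trans ?_, fun r r' hr hr' => (hC r r' hr.le hr'.le).trans ?_⟩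
  · apply mul_le_mul_of_nonneg_left _ hC0
    have := abs_min_sub_min_le_max r R r' R
    simpa using this
  · have h1 := mul_le_mul_of_nonneg_left (min_diff R r r' hr hr' hR) hC0
    have h2 : 0 ≤ C * (R ^ 2 * (|r - r'| / (r * r'))) := by positivity
    have h3 := mul_le_mul_of_nonneg_right hN h2
    calc _ ≤ _ := h1
      _ ≤ N * (C * (R ^ 2 * (|r - r'| / (r * r')))) := by linarith
      _ = _ := by ring
structure SubS {n : ℕ} (g : ℝ → ℝ) (U : EE n → ℝ → ℝ) : Prop where
  sub : RadSub 1 g U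
  cont : ContinuousOn (fun p : EE n × ℝ => U p.1 p.2) (Set.univ ×ˢ Set.Ici 0)
  bdd : ∀ T, ∃ M, ∀ x, ∀ t ∈ Icc 0 T, U x t ≤ M
  tuc : ∀ T, TimeUC U T

structure SupS {n : ℕ} (g : ℝ → ℝ) (V : EE n → ℝ → ℝ) : Prop where
  sup : RadSub (-1) (fun r => - g r) (fun x t => - V x t)
  cont : ContinuousOn (fun p : EE n × ℝ => V p.1 p.2) (Set.univ ×ˢ Set.Ici 0)
  bdd : ∀ T, ∃ M, ∀ x, ∀ t ∈ Icc 0 T, - V x t ≤ M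
  tuc : ∀ T, TimeUC V T

/-- data on the source term -/
structure FD (N : ℝ) (f : ℝ → ℝ) (C L : ℝ) : Prop where
  C0 : 0 ≤ C
  L0 : 0 ≤ L
  hC : ∀ r r', 0 ≤ r → 0 ≤ r' → |f r - f r'| ≤ C * |r - r'|
  hL : ∀ r r', 0 < r → 0 < r' → |f r - f r'| ≤ L * N * |r - r'| / (r * r')

theorem DE' {n : ℕ} (hn : 2 ≤ n) {f g g2 X X' : ℝ → ℝ} {U V : EE n → ℝ → ℝ}
    (hU : SubS g U) (hV : SupS g2 V)
    {T m K L C E Z a : ℝ} {B : Set ℝ} (hf : FD ((n : ℝ) - 1) f C L) (hg : ∀ r, g r = f r + a)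
    (hT : 0 ≤ T)
    (hK : 0 ≤ K) (hKL : 2 * L ≤ K)
    (hX : ∀ r > 0, HasDerivAt X (X' r) r) (hX' : ∀ r > 0, ContinuousAt X' r)
    (hX0 : ∀ r > 0, 0 ≤ X r)
    (hGB : ∀ r > 0, r ∉ B → g r + m ≤ -(((n : ℝ) - 1) / r * X' r + |X' r|) + g2 r)
    (hZ : 0 ≤ Z) (hZm : m * (T + 1) ≤ Z)
    (hinit : ∀ x y : EE n, x ≠ 0 → y ≠ 0 → U x 0 - V y 0 - X ‖y‖ ≤ E + K * |‖x‖ - ‖y‖| + Z)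
    (hB : ∀ t ∈ Icc 0 (T + 1), ∀ x y : EE n, x ≠ 0 → y ≠ 0 → ‖y‖ ∈ B →
      U x t - V y t - X ‖y‖ ≤ E + K * |‖x‖ - ‖y‖|) :
    ∀ t ∈ Icc 0 T, ∀ x y : EE n, x ≠ 0 → y ≠ 0 →
      U x t - V y t - X ‖y‖ ≤ E + K * |‖x‖ - ‖y‖| + Z - m * t := by
  obtain ⟨M, hM⟩ := hU.bdd (T + 1)
  obtain ⟨M', hM'⟩ := hV.bdd (T + 1)
  refine DE hn hU.sub hV.sup hU.cont hV.cont hT (M1 := max M M')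
    (fun x t ht => (hM x t ht).trans (le_max_left _ _))
    (fun x t ht => (hM' x t ht).trans (le_max_right _ _)) (hU.tuc _) (hV.tuc _) hK hKL hf.C0 ?_ ?_
    hX hX' hX0 hGB hZ hZm hinit hB
  · intro r r' h1 h2
    rw [hg, hg, add_sub_add_right_eq_sub]
    exact hf.hC r r' h1.le h2.le
  · intro r r' h1 h2
    rw [hg, hg, add_sub_add_right_eq_sub]
    exact hf.hL r r' h1 h2

lemma cont_shift {n : ℕ} {U : EE n → ℝ → ℝ}
    (h : ContinuousOn (fun p : EE n × ℝ => U p.1 p.2) (Set.univ ×ˢ Set.Ici 0)) {s : ℝ} (hs : 0 ≤ s) :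
    ContinuousOn (fun p : EE n × ℝ => U p.1 (s + p.2)) (Set.univ ×ˢ Set.Ici 0) := by
  refine h.comp (f := fun p : EE n × ℝ => (p.1, s + p.2)) (by fun_prop) ?_
  intro p hp
  have : 0 ≤ p.2 := hp.2
  exact ⟨mem_univ _, by simp only [mem_Ici]; linarith⟩

lemma tuc_shift {n : ℕ} {U : EE n → ℝ → ℝ} (h : ∀ T, TimeUC U T) {s : ℝ} (hs : 0 ≤ s) (T : ℝ) :
    TimeUC (fun x t => U x (s + t)) T := by
  intro ν hν
  obtain ⟨τ, hτ, h1⟩ := h (s + T) ν hν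
  refine ⟨τ, hτ, fun x t ht t' ht' hd => ?_⟩
  apply h1 x _ ⟨by linarith [ht.1], by linarith [ht.2]⟩ _ ⟨by linarith [ht'.1], by linarith [ht'.2]⟩
  simpa using hd

lemma SubS.shift {n : ℕ} {g : ℝ → ℝ} {U : EE n → ℝ → ℝ} (h : SubS g U) {s : ℝ} (hs : 0 ≤ s) :
    SubS g (fun x t => U x (s + t)) where
  sub := RadSub_shift h.sub s hs
  cont := cont_shift h.cont hs
  bdd := by
    intro T
    obtain ⟨M, hM⟩ := h.bdd (s + T)
    exact ⟨M, fun x t ht => hM x _ ⟨by linarith [ht.1], by linarith [ht.2]⟩⟩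
  tuc := tuc_shift h.tuc hs

lemma SupS.shift {n : ℕ} {g : ℝ → ℝ} {U : EE n → ℝ → ℝ} (h : SupS g U) {s : ℝ} (hs : 0 ≤ s) :
    SupS g (fun x t => U x (s + t)) where
  sup := RadSub_shift h.sup s hs
  cont := cont_shift h.cont hs
  bdd := by
    intro T
    obtain ⟨M, hM⟩ := h.bdd (s + T)
    exact ⟨M, fun x t ht => hM x _ ⟨by linarith [ht.1], by linarith [ht.2]⟩⟩
  tuc := tuc_shift h.tuc hs

lemma SupS.scale {n : ℕ} {g : ℝ → ℝ} {U : EE n → ℝ → ℝ} (h : SupS g U) {θ : ℝ} (hθ : 0 < θ) :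
    SupS (fun r => θ * g r) (fun x t => θ * U x t) where
  sup := by
    have := RadSub_scale h.sup θ hθ
    simpa only [mul_neg] using this
  cont := continuousOn_const.mul h.cont
  bdd := by
    intro T
    obtain ⟨M, hM⟩ := h.bdd T
    refine ⟨θ * M, fun x t ht => ?_⟩
    rw [← mul_neg]
    exact mul_le_mul_of_nonneg_left (hM x t ht) hθ.le
  tuc := by
    intro T ν hν
    obtain ⟨τ, hτ, h1⟩ := h.tuc T (ν / θ) (by positivity)
    refine ⟨τ, hτ, fun x t ht t' ht' hd => ?_⟩
    rw [← mul_sub, abs_mul, abs_of_pos hθ]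
    have := h1 x t ht t' ht' hd
    rw [lt_div_iff₀ hθ] at this
    linarith

lemma SupS_zero {n : ℕ} : SupS (n := n) (fun _ => 0) (fun _ _ => 0) where
  sup := by
    have := RadSub_smooth (n := n) (σ := -1) (g := fun _ => -0) (fun _ => -0) (fun _ => 0)
      (fun r _ => hasDerivAt_const r _) (fun r _ => by simp)
    exact this
  cont := continuousOn_const
  bdd := fun T => ⟨0, fun x t _ => by simp⟩
  tuc := fun T ν hν => ⟨1, one_pos, fun x t _ s _ _ => by simpa using hν⟩

lemma ext0 {n : ℕ} (hn : 2 ≤ n) {F : EE n × EE n → ℝ} (hF : Continuous F)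
    (h : ∀ x y : EE n, x ≠ 0 → y ≠ 0 → F (x, y) ≤ 0) (x y : EE n) : F (x, y) ≤ 0 := by
  haveI : Nonempty (Fin n) := ⟨⟨0, by omega⟩⟩
  haveI : Nontrivial (EE n) := inferInstance
  have hd : Dense ({(0 : EE n)}ᶜ : Set (EE n)) := dense_compl_singleton 0
  have hd2 := hd.prod hd
  have hcl : IsClosed {p : EE n × EE n | F p ≤ 0} := isClosed_le hF continuous_const
  have : (({(0 : EE n)}ᶜ : Set (EE n)) ×ˢ ({(0 : EE n)}ᶜ : Set (EE n))) ⊆ {p : EE n × EE n | F p ≤ 0} := by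
    rintro ⟨a, b⟩ ⟨ha, hb⟩
    exact h a b ha hb
  have := hcl.closure_subset_iff.2 this
  exact this (hd2 (x, y))

/-- all data about the solution `w = u - c t` -/
structure Dat {n : ℕ} (f : ℝ → ℝ) (c C L : ℝ) (w : EE n → ℝ → ℝ) : Prop where
  hn : 2 ≤ n
  fd : FD ((n : ℝ) - 1) f C L
  sub : SubS (fun r => f r - c) w
  sup : SupS (fun r => f r - c) w
  uc0 : ∀ ε > 0, ∃ δ > 0, ∀ x y : EE n, |‖x‖ - ‖y‖| < δ → |w x 0 - w y 0| < ε
  fnn : ∀ r, 0 ≤ r → 0 ≤ f r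
  supp : ∃ R > 0, ∀ r ≥ R, f r = 0
  cmax : ∀ r, (n : ℝ) - 1 ≤ r → f r ≤ c
  catt : ∃ r, (n : ℝ) - 1 ≤ r ∧ f r = c

namespace Dat
variable {n : ℕ} {f : ℝ → ℝ} {c C L : ℝ} {w : EE n → ℝ → ℝ}

lemma hN (d : Dat f c C L w) : (1 : ℝ) ≤ (n : ℝ) - 1 := by
  have : (2 : ℝ) ≤ n := by exact_mod_cast d.hn
  linarith

lemma c0 (d : Dat f c C L w) : 0 ≤ c := by
  obtain ⟨r, h1, h2⟩ := d.catt
  rw [← h2]; exact d.fnn r (by linarith [d.hN])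

lemma contx (d : Dat f c C L w) {t : ℝ} (ht : 0 ≤ t) : Continuous (fun x => w x t) := by
  rw [← continuousOn_univ]
  exact d.sub.cont.comp (f := fun x : EE n => (x, t)) (by fun_prop) (fun x _ => ⟨mem_univ _, ht⟩)

lemma modulus (d : Dat f c C L w) {ε : ℝ} (hε : 0 < ε) : ∃ K1, 0 ≤ K1 ∧ ∀ K ≥ K1, ∀ t ≥ 0, ∀ x y : EE n,
    w x t - w y t ≤ ε + K * |‖x‖ - ‖y‖| := by
  obtain ⟨δ, hδ, hd⟩ := d.uc0 ε hε
  obtain ⟨M, hM⟩ := d.sub.bdd 0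
  obtain ⟨M', hM'⟩ := d.sup.bdd 0
  have hM0 : 0 ≤ M + M' := by
    have h1 := hM 0 0 ⟨le_rfl, le_rfl⟩
    have h2 := hM' 0 0 ⟨le_rfl, le_rfl⟩
    linarith
  refine ⟨max (2 * L) ((M + M') / δ), le_max_of_le_right (by positivity), ?_⟩
  intro K hK t ht
  have hK1 : 2 * L ≤ K := (le_max_left _ _).trans hK
  have hK2 : (M + M') / δ ≤ K := (le_max_right _ _).trans hK
  have hK0 : 0 ≤ K := le_trans (by positivity) hK2
  have key := DE' d.hn d.sub d.sup (T := t) (m := 0) (K := K) (E := ε) (Z := 0) (a := - c) (B := ∅)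
    (X := fun _ => 0) (X' := fun _ => 0) d.fd (fun r => by ring) ht hK0 hK1
    (fun r _ => hasDerivAt_const r _) (fun r _ => continuousAt_const) (fun r _ => le_rfl)
    (fun r _ _ => by simp) le_rfl (by simp) ?_ ?_ t ⟨ht, le_rfl⟩
  · intro x y
    have := ext0 d.hn (F := fun p => w p.1 t - w p.2 t - (ε + K * |‖p.1‖ - ‖p.2‖|)) ?_ ?_ x y
    · simp only at this; linarith
    · have h1 := (d.contx ht).comp (continuous_fst (X := EE n) (Y := EE n))
      have h2 := (d.contx ht).comp (continuous_snd (X := EE n) (Y := EE n))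
      exact (h1.sub h2).sub (by fun_prop)
    · intro x y hx hy
      have := key x y hx hy
      simp only
      linarith
  · intro x y hx hy
    rcases lt_or_ge |‖x‖ - ‖y‖| δ with h | h
    · have h1 := hd x y h
      rw [abs_lt] at h1
      have : 0 ≤ K * |‖x‖ - ‖y‖| := by positivity
      linarith
    · have h1 := hM x 0 ⟨le_rfl, le_rfl⟩
      have h2 := hM' y 0 ⟨le_rfl, le_rfl⟩
      have h3 : M + M' ≤ K * |‖x‖ - ‖y‖| := by
        rw [div_le_iff₀ hδ] at hK2
        exact hK2.trans (mul_le_mul_of_nonneg_left h hK0)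
      linarith
  · intro t _ x y _ _ h
    exact absurd h (notMem_empty _)

end Dat

lemma hasDerivAt_pos_sq (z : ℝ) : HasDerivAt (fun z : ℝ => (max z 0) ^ 2) (2 * max z 0) z := by
  rcases lt_trichotomy z 0 with h | h | h
  · rw [max_eq_right h.le, mul_zero]
    refine (hasDerivAt_const z (0 : ℝ)).congr_of_eventuallyEq ?_
    filter_upwards [Iio_mem_nhds h] with y hy
    rw [max_eq_right (le_of_lt hy)]; simp
  · subst h
    simp only [max_self, mul_zero]
    rw [hasDerivAt_iff_isLittleO]
    have : (fun x' : ℝ => max x' 0 ^ 2 - max 0 0 ^ 2 - (x' - 0) • (0 : ℝ)) =O[𝓝 0] (fun x' => x' ^ 2) := by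
      refine Asymptotics.IsBigO.of_bound 1 (Eventually.of_forall fun y => ?_)
      simp
      rcases le_total y 0 with h | h
      · rw [max_eq_right h]; nlinarith [sq_nonneg y]
      · rw [max_eq_left h]
    refine this.trans_isLittleO ?_
    simp only [sub_zero]
    exact Asymptotics.isLittleO_pow_id (by norm_num)
  · rw [max_eq_left h.le]
    have : HasDerivAt (fun z : ℝ => z ^ 2) (2 * z) z := by simpa using hasDerivAt_pow 2 z
    refine this.congr_of_eventuallyEq ?_
    filter_upwards [Ioi_mem_nhds h] with y hy
    rw [max_eq_left (le_of_lt hy)]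
lemma X_deriv (N A δ r : ℝ) (hδ : 0 < δ) :
    HasDerivAt (fun r => A * (√((max (N - r) 0) ^ 2 + δ ^ 2) - δ))
      (-(A * (max (N - r) 0 / √((max (N - r) 0) ^ 2 + δ ^ 2)))) r := by
  have h0 : HasDerivAt (fun r => N - r) (-1) r := by
    simpa using (hasDerivAt_id r).const_sub N
  have h1 : HasDerivAt (fun r => (max (N - r) 0) ^ 2 + δ ^ 2) (2 * max (N - r) 0 * (-1)) r :=
    ((hasDerivAt_pos_sq (N - r)).comp r h0).add_const _
  refine (((h1.sqrt (by positivity)).sub_const δ).const_mul A).congr_deriv ?_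
  have : √((max (N - r) 0) ^ 2 + δ ^ 2) ≠ 0 := (Real.sqrt_pos.mpr (by positivity)).ne'
  field_simp

lemma sqrt_le_add (z δ : ℝ) (hz : 0 ≤ z) (hδ : 0 ≤ δ) : √(z ^ 2 + δ ^ 2) ≤ z + δ := by
  apply Real.sqrt_le_iff.2 ⟨by positivity, ?_⟩
  nlinarith [mul_nonneg hz hδ]

lemma div_root_ge (z δ : ℝ) (hz : 0 ≤ z) (hδ : 0 < δ) : z - δ ≤ z ^ 2 / √(z ^ 2 + δ ^ 2) := by
  have hq : 0 < √(z ^ 2 + δ ^ 2) := Real.sqrt_pos.mpr (by positivity)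
  rw [le_div_iff₀ hq]
  rcases le_total z δ with h | h
  · have : (z - δ) * √(z ^ 2 + δ ^ 2) ≤ 0 := mul_nonpos_of_nonpos_of_nonneg (by linarith) hq.le
    nlinarith [sq_nonneg z]
  · have := mul_le_mul_of_nonneg_left (sqrt_le_add z δ hz hδ.le) (sub_nonneg.2 h)
    nlinarith [sq_nonneg δ]

namespace Dat
variable {n : ℕ} {f : ℝ → ℝ} {c C L : ℝ} {w : EE n → ℝ → ℝ}

lemma upper (d : Dat f c C L w) : ∃ M, ∀ t ≥ 0, ∀ x : EE n, w x t ≤ M := by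
  obtain ⟨M, hM⟩ := d.sub.bdd 0
  have hN := d.hN
  obtain ⟨N, hNd⟩ : ∃ N : ℝ, N = (n : ℝ) - 1 := ⟨_, rfl⟩
  rw [← hNd] at hN
  have hC0 := d.fd.C0
  refine ⟨M + C * N * N, fun t ht x => ?_⟩
  have key : ∀ δ > 0, ∀ x : EE n, x ≠ 0 → w x t ≤ M + C * N * N + C * t * δ := by
    intro δ hδ x hx
    have := DE' d.hn d.sub SupS_zero (T := t) (m := - (C * δ)) (K := 2 * L) (E := M) (Z := 0) (a := - c)
      (B := ∅) (X := fun r => C * N * (√((max (N - r) 0) ^ 2 + δ ^ 2) - δ))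
      (X' := fun r => -(C * N * (max (N - r) 0 / √((max (N - r) 0) ^ 2 + δ ^ 2)))) d.fd
      (fun r => by ring) ht (by linarith [d.fd.L0]) le_rfl (fun r _ => X_deriv N _ δ r hδ)
      ?_ ?_ ?_ le_rfl ?_ ?_ ?_ t ⟨ht, le_rfl⟩ x x hx hx
    · have h1 := sqrt_le_add (max (N - ‖x‖) 0) δ (le_max_right _ _) hδ.le
      have h2 : max (N - ‖x‖) 0 ≤ N := max_le (by linarith [norm_nonneg x]) (by linarith)
      have h3 : C * N * (√((max (N - ‖x‖) 0) ^ 2 + δ ^ 2) - δ) ≤ C * N * N := by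
        apply mul_le_mul_of_nonneg_left _ (by positivity); linarith
      simp only [sub_self, abs_zero, mul_zero] at this
      linarith
    · intro r _
      have h1 : ContinuousAt (fun r => max (N - r) 0 / √((max (N - r) 0) ^ 2 + δ ^ 2)) r := by
        apply ContinuousAt.div (by fun_prop) (by fun_prop)
        exact (Real.sqrt_pos.mpr (by positivity)).ne'
      exact (h1.const_mul (C * N)).neg
    · intro r _
      apply mul_nonneg (by positivity)
      have : δ ≤ √((max (N - r) 0) ^ 2 + δ ^ 2) := by
        apply Real.le_sqrt_of_sq_le; nlinarith [sq_nonneg (max (N - r) 0)]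
      linarith
    · intro r hr _
      rw [← hNd]
      have hCδ : 0 ≤ C * δ := by positivity
      rcases le_total N r with h | h
      · rw [max_eq_right (by linarith)]
        have := d.cmax r (by rw [← hNd]; exact h)
        simp
        linarith
      · rw [max_eq_left (by linarith)]
        have hz : 0 ≤ N - r := by linarith
        have h1 := div_root_ge (N - r) δ hz hδ
        have hq : 0 < √((N - r) ^ 2 + δ ^ 2) := Real.sqrt_pos.mpr (by positivity)
        set q := √((N - r) ^ 2 + δ ^ 2) with hqd
        have h2 := d.fd.hC r N hr.le (by linarith)
        have h3 := d.cmax N hNd.ge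
        rw [abs_le, abs_of_nonpos (by linarith)] at h2
        rw [abs_neg, abs_of_nonneg (by positivity)]
        have h4 : C * ((N - r) ^ 2 / q) ≤ N / r * (C * N * ((N - r) / q)) - C * N * ((N - r) / q) := by
          have e : N / r * (C * N * ((N - r) / q)) - C * N * ((N - r) / q)
             = (N / r) * (C * ((N - r) ^ 2 / q)) := by
            field_simp
          rw [e]
          have : 1 ≤ N / r := by rw [le_div_iff₀ hr]; linarith
          have h5 : 0 ≤ C * ((N - r) ^ 2 / q) := by positivity
          nlinarith
        have h6 := mul_le_mul_of_nonneg_left h1 hC0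
        nlinarith [h2.2]
    · have : 0 ≤ C * δ * (t + 1) := by positivity
      linarith
    · intro x y _ _
      have h1 := hM x 0 ⟨le_rfl, le_rfl⟩
      have h2 : 0 ≤ 2 * L * |‖x‖ - ‖y‖| := by have := d.fd.L0; positivity
      have h3 : 0 ≤ C * N * (√((max (N - ‖y‖) 0) ^ 2 + δ ^ 2) - δ) := by
        apply mul_nonneg (by positivity)
        have : δ ≤ √((max (N - ‖y‖) 0) ^ 2 + δ ^ 2) := by
          apply Real.le_sqrt_of_sq_le; nlinarith [sq_nonneg (max (N - ‖y‖) 0)]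
        linarith
      linarith
    · intro t _ x y _ _ h
      exact absurd h (notMem_empty _)
  have key2 : ∀ x : EE n, x ≠ 0 → w x t ≤ M + C * N * N := by
    intro x hx
    refine le_of_forall_pos_le_add fun ε hε => ?_
    have := key (ε / (C * t + 1)) (by positivity) x hx
    refine this.trans ?_
    have : C * t * (ε / (C * t + 1)) ≤ ε := by
      rw [← mul_div_assoc, div_le_iff₀ (by positivity)]
      nlinarith
    linarith
  have := ext0 d.hn (F := fun p => w p.1 t - (M + C * N * N)) ?_ ?_ x x
  · simp only at this; linarith
  · exact ((d.contx ht).comp (continuous_fst (X := EE n) (Y := EE n))).sub continuous_const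
  · intro x y hx _
    have := key2 x hx
    simp only; linarith

lemma almost (d : Dat f c C L w) : ∃ M2, 0 ≤ M2 ∧ ∀ h ≥ 0, ∀ t ≥ 0, ∀ x : EE n, x ≠ 0 → 
    w x (h + t) - w x t ≤ M2 := by
  obtain ⟨M, hM⟩ := d.upper
  obtain ⟨M', hM'⟩ := d.sup.bdd 0
  have hMM : 0 ≤ M + M' := by
    have h1 := hM 0 le_rfl 0
    have h2 := hM' 0 0 ⟨le_rfl, le_rfl⟩
    linarith
  refine ⟨M + M', hMM, fun h hh t ht x hx => ?_⟩
  have := DE' d.hn (d.sub.shift hh) d.sup (T := t) (m := 0) (K := 2 * L) (E := M + M') (Z := 0) (a := - c) (B := ∅)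
    (X := fun _ => 0) (X' := fun _ => 0) d.fd (fun r => by ring) ht (by linarith [d.fd.L0]) le_rfl
    (fun r _ => hasDerivAt_const r _) (fun r _ => continuousAt_const) (fun r _ => le_rfl)
    (fun r _ _ => by simp) le_rfl (by simp) ?_ ?_ t ⟨ht, le_rfl⟩ x x hx hx
  · simp only [sub_self, abs_zero, mul_zero] at this
    linarith
  · intro x y _ _
    have h1 := hM (h + 0) (by linarith) x
    have h2 := hM' y 0 ⟨le_rfl, le_rfl⟩
    have h3 : 0 ≤ 2 * L * |‖x‖ - ‖y‖| := by have := d.fd.L0; positivity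
    linarith
  · intro t _ x y _ _ h
    exact absurd h (notMem_empty _)

end Dat
lemma cone_ineq {N K C L c δ r r₀ F : ℝ} (hN : 1 ≤ N) (hr : 0 < r) (hr₀ : N ≤ r₀)
    (hK : 0 ≤ K) (hKL : 2 * L ≤ K) (hL0 : 0 ≤ L)
    (hKc : 2 * c ≤ K) (hC0 : 0 ≤ C) (hδ : 0 < δ) (hF0 : 0 ≤ F)
    (hC : |F - c| ≤ C * |r - r₀|) (hL : |F - c| ≤ L * N * |r - r₀| / (r * r₀)) :
    -(N / r * (-(K * ((r - r₀) / √((r - r₀) ^ 2 + δ ^ 2))))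
      + |-(K * ((r - r₀) / √((r - r₀) ^ 2 + δ ^ 2)))|) ≤ F - c + C * δ := by
  have hr₀p : 0 < r₀ := by linarith
  obtain ⟨s, hs⟩ : ∃ s, s = r - r₀ := ⟨_, rfl⟩
  rw [← hs] at hC hL ⊢
  obtain ⟨q, hq⟩ : ∃ q, q = √(s ^ 2 + δ ^ 2) := ⟨_, rfl⟩
  have hqp : 0 < q := by rw [hq]; exact Real.sqrt_pos.mpr (by positivity)
  have hqsq : q ^ 2 = s ^ 2 + δ ^ 2 := by rw [hq]; exact Real.sq_sqrt (by positivity)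
  rw [← hq, abs_neg, abs_mul, abs_div, abs_of_nonneg hK, abs_of_pos hqp]
  have hFl := neg_abs_le (F - c)
  have hq2 : δ ≤ |s| → q ≤ 2 * |s| := by
    intro h
    apply abs_le_of_sq_le_sq' _ (by positivity) |>.2
    rw [hqsq, mul_pow, sq_abs]
    have : δ ^ 2 ≤ s ^ 2 := by rw [← sq_abs s]; exact pow_le_pow_left₀ hδ.le h 2
    nlinarith [sq_nonneg s]
  have hCδ : 0 ≤ C * δ := by positivity
  have hsm : |s| ≤ δ → - (C * δ) ≤ F - c := by
    intro h
    have := mul_le_mul_of_nonneg_left h hC0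
    linarith
  rcases le_total 0 s with h0 | h0
  · rw [abs_of_nonneg h0] at hC hL hq2 hsm ⊢
    have e : -(N / r * (-(K * (s / q))) + K * (s / q)) = -(K * (r - N) / r * (s / q)) := by
      field_simp; ring
    rw [e]
    have h1 : 0 ≤ s / q := by positivity
    have hsr : s ≤ r - N := by linarith
    have h2 : K * s / r * (s / q) ≤ K * (r - N) / r * (s / q) := by gcongr
    rcases le_total δ s with hd | hd
    · have h3 : 1 / 2 ≤ s / q := by
        rw [div_le_div_iff₀ (by norm_num) hqp]; linarith [hq2 hd]
      have h4 : K * s / r * (1 / 2) ≤ K * s / r * (s / q) := by gcongr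
      have h5 : L * N * s / (r * r₀) ≤ L * s / r := by
        rw [div_le_div_iff₀ (by positivity) hr]
        have : 0 ≤ L * s * r * (r₀ - N) := by
          apply mul_nonneg (by positivity); linarith
        nlinarith
      have h6 : L * s / r ≤ K * s / r * (1 / 2) := by
        rw [div_mul_eq_mul_div]
        have : L * s ≤ K * s * (1 / 2) := by nlinarith
        exact div_le_div_of_nonneg_right this hr.le
      linarith
    · have : 0 ≤ K * s / r * (s / q) := by positivity
      linarith [hsm hd]
  · rw [abs_of_nonpos h0] at hC hL hq2 hsm ⊢
    have e : -(N / r * (-(K * (s / q))) + K * (-s / q)) = -((N / r + 1) * (K * (-s / q))) := by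
      ring
    rw [e]
    have h1 : 0 ≤ K * (-s / q) := by
      have : 0 ≤ -s := by linarith
      positivity
    have h2 : 0 ≤ N / r * (K * (-s / q)) := by
      have : 0 ≤ -s := by linarith
      positivity
    rcases le_total δ (-s) with hd | hd
    · have h3 : 1 / 2 ≤ -s / q := by
        rw [div_le_div_iff₀ (by norm_num) hqp]; linarith [hq2 hd]
      have := mul_le_mul_of_nonneg_left h3 hK
      linarith
    · linarith [hsm hd]

namespace Dat
variable {n : ℕ} {f : ℝ → ℝ} {c C L : ℝ} {w : EE n → ℝ → ℝ}

lemma monoA (d : Dat f c C L w) {x₀ : EE n} (h1 : (n : ℝ) - 1 ≤ ‖x₀‖) (h2 : f ‖x₀‖ = c)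
    {t₁ s : ℝ} (ht₁ : 0 ≤ t₁) (hs : 0 ≤ s) : w x₀ t₁ ≤ w x₀ (t₁ + s) := by
  have hN := d.hN
  have hx₀ : x₀ ≠ 0 := by rw [← norm_pos_iff]; linarith
  have hr₀ : 0 < ‖x₀‖ := by linarith
  have hC0 := d.fd.C0
  refine le_of_forall_pos_le_add fun ε hε => ?_
  obtain ⟨K1, hK1, hmod⟩ := d.modulus (half_pos hε)
  obtain ⟨K, hK⟩ : ∃ K, K = max K1 (max (2 * L) (2 * c)) := ⟨_, rfl⟩
  have hKa : K1 ≤ K := by rw [hK]; exact le_max_left _ _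
  have hKb : 2 * L ≤ K := by rw [hK]; exact (le_max_left _ _).trans (le_max_right _ _)
  have hKc : 2 * c ≤ K := by rw [hK]; exact (le_max_right _ _).trans (le_max_right _ _)
  have hK0 : 0 ≤ K := hK1.trans hKa
  have hmod := hmod K hKa
  have key : ∀ δ > 0, w x₀ t₁ - ε / 2 - K * δ - w x₀ (t₁ + s) ≤ C * δ * s := by
    intro δ hδ
    have hY : SubS (n := n) (fun r => f r - c + C * δ)
        (fun x _ => (fun r => w x₀ t₁ - ε / 2 - K * √((r - ‖x₀‖) ^ 2 + δ ^ 2)) ‖x‖) := by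
      refine ⟨RadSub_smooth (fun r => w x₀ t₁ - ε / 2 - K * √((r - ‖x₀‖) ^ 2 + δ ^ 2))
        (fun r => -(K * ((r - ‖x₀‖) / √((r - ‖x₀‖) ^ 2 + δ ^ 2)))) ?_ ?_, ?_, ?_, ?_⟩
      · intro r _
        exact ((hasDerivAt_root ‖x₀‖ δ r hδ).const_mul K).const_sub _
      · intro r hr
        rw [one_mul]
        have a1 := d.fd.hC r ‖x₀‖ hr.le hr₀.le
        have a2 := d.fd.hL r ‖x₀‖ hr hr₀
        rw [h2] at a1 a2
        exact cone_ineq hN hr h1 hK0 hKb d.fd.L0 hKc hC0 hδ (d.fnn r hr.le) a1 a2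
      · apply Continuous.continuousOn
        fun_prop
      · intro T
        refine ⟨w x₀ t₁, fun x t _ => ?_⟩
        have : 0 ≤ K * √((‖x‖ - ‖x₀‖) ^ 2 + δ ^ 2) := by positivity
        simp only; linarith
      · intro T ν hν
        exact ⟨1, one_pos, fun x t _ s _ _ => by simpa using hν⟩
    have := DE' d.hn hY (d.sup.shift ht₁) (T := s) (m := - (C * δ)) (K := K) (E := 0) (Z := 0) (a := - c + C * δ)
      (B := ∅) (X := fun _ => 0) (X' := fun _ => 0) d.fd (fun r => by ring) hs hK0 hKb
      (fun r _ => hasDerivAt_const r _) (fun r _ => continuousAt_const) (fun r _ => le_rfl)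
      (fun r _ _ => by simp) le_rfl ?_ ?_ ?_ s ⟨hs, le_rfl⟩ x₀ x₀ hx₀ hx₀
    · simp only [sub_self, abs_zero, mul_zero] at this
      have e : √((0 : ℝ) ^ 2 + δ ^ 2) = δ := by
        rw [zero_pow (by norm_num), zero_add, Real.sqrt_sq hδ.le]
      rw [e] at this
      linarith
    · have : 0 ≤ C * δ * (s + 1) := by positivity
      linarith
    · intro x y _ _
      have a1 := hmod t₁ ht₁ x₀ y
      have a2 : |‖x₀‖ - ‖y‖| ≤ |‖x‖ - ‖y‖| + √((‖x‖ - ‖x₀‖) ^ 2 + δ ^ 2) := by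
        have b1 : |‖x‖ - ‖x₀‖| ≤ √((‖x‖ - ‖x₀‖) ^ 2 + δ ^ 2) := by
          apply Real.le_sqrt_of_sq_le
          rw [sq_abs]; nlinarith [sq_nonneg δ]
        have b2 := abs_sub_le ‖x₀‖ ‖x‖ ‖y‖
        rw [abs_sub_comm ‖x₀‖ ‖x‖] at b2
        linarith
      have a3 := mul_le_mul_of_nonneg_left a2 hK0
      simp only [add_zero]
      linarith
    · intro t _ x y _ _ h
      exact absurd h (notMem_empty _)
  have := key (ε / (2 * (K + C * s + 1))) (by positivity)
  have e : K * (ε / (2 * (K + C * s + 1))) + C * (ε / (2 * (K + C * s + 1))) * s ≤ ε / 2 := by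
    have : K * (ε / (2 * (K + C * s + 1))) + C * (ε / (2 * (K + C * s + 1))) * s
        = (K + C * s) / (K + C * s + 1) * (ε / 2) := by field_simp
    rw [this]
    have : (K + C * s) / (K + C * s + 1) ≤ 1 := by
      rw [div_le_one (by positivity)]; linarith
    nlinarith
  linarith

lemma exists_norm (d : Dat f c C L w) {r : ℝ} (hr : 0 ≤ r) : ∃ x : EE n, ‖x‖ = r := by
  haveI : Nonempty (Fin n) := ⟨⟨0, by have := d.hn; omega⟩⟩
  haveI : Nontrivial (EE n) := inferInstance
  exact exists_norm_eq (EE n) hr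

lemma lower (d : Dat f c C L w) (R : ℝ) : ∃ M, 0 ≤ M ∧ ∀ t ≥ 0, ∀ x : EE n, ‖x‖ ≤ R → - M ≤ w x t := by
  obtain ⟨r, h1, h2⟩ := d.catt
  obtain ⟨x₀, hx₀⟩ := d.exists_norm (r := r) (by linarith [d.hN])
  obtain ⟨K, hK0, hmod⟩ := d.modulus one_pos
  have hmod := hmod K le_rfl
  refine ⟨|w x₀ 0| + 1 + K * (|r| + |R|), by positivity, fun t ht x hx => ?_⟩
  have a1 := hmod t ht x₀ x
  have a2 := d.monoA (x₀ := x₀) (by rw [hx₀]; exact h1) (by rw [hx₀]; exact h2) le_rfl ht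
  rw [zero_add] at a2
  have a3 : |‖x₀‖ - ‖x‖| ≤ |r| + |R| := by
    rw [hx₀, abs_le]
    have := norm_nonneg x
    have := le_abs_self R
    have := le_abs_self r
    have := neg_abs_le r
    have := abs_nonneg R
    constructor <;> linarith
  have a4 := mul_le_mul_of_nonneg_left a3 hK0
  have := neg_abs_le (w x₀ 0)
  linarith

end Dat

lemma uni_net {n : ℕ} {w : EE n → ℝ → ℝ} {v : EE n → ℝ} {S : Set (EE n)} (hS : TotallyBounded S)
    (hm : ∀ ε > 0, ∃ δ > 0, ∀ t ≥ 0, ∀ x y : EE n, dist x y < δ → w x t - w y t ≤ ε)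
    (hv : ∀ x ∈ S, Tendsto (w x) atTop (𝓝 (v x))) :
    TendstoUniformlyOn (fun t x => w x t) v atTop S := by
  rw [Metric.tendstoUniformlyOn_iff]
  intro ε hε
  obtain ⟨δ, hδ, hd⟩ := hm (ε / 8) (by positivity)
  have hdv : ∀ x ∈ S, ∀ y ∈ S, dist x y < δ → v x - v y ≤ ε / 8 := by
    intro x hx y hy hxy
    refine le_of_tendsto ((hv x hx).sub (hv y hy)) ?_
    filter_upwards [eventually_ge_atTop 0] with t ht
    exact hd t ht x y hxy
  obtain ⟨F, hFS, hF, hcov⟩ := hS.exists_subset (Metric.dist_mem_uniformity hδ)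
  have hev : ∀ᶠ t in atTop, ∀ y ∈ F, dist (w y t) (v y) < ε / 8 := by
    rw [hF.eventually_all]
    intro y hy
    exact Metric.tendsto_nhds.1 (hv y (hFS hy)) _ (by positivity)
  filter_upwards [hev, eventually_ge_atTop 0] with t ht ht0 x hx
  obtain ⟨y, hy, hxy⟩ := mem_iUnion₂.1 (hcov hx)
  have hxy' : dist x y < δ := hxy
  have a1 := hd t ht0 x y hxy'
  have a2 := hd t ht0 y x (by rwa [dist_comm])
  have a3 := hdv x hx y (hFS hy) hxy'
  have a4 := hdv y (hFS hy) x hx (by rwa [dist_comm])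
  have a5 := ht y hy
  rw [Real.dist_eq, abs_lt] at a5 ⊢
  constructor <;> linarith [a5.1, a5.2]

lemma almost_mono_lim {φ : ℝ → ℝ} {a b : ℝ} (ha : ∀ t ≥ 0, a ≤ φ t) (hb : ∀ t ≥ 0, φ t ≤ b)
    (h : ∀ ε > 0, ∃ T, ∀ t ≥ T, ∀ s ≥ 0, φ (t + s) ≤ φ t + ε) : ∃ l, Tendsto φ atTop (𝓝 l) := by
  set S : Set ℝ := {z | ∀ᶠ t in atTop, φ t ≤ z} with hS
  have hne : S.Nonempty := ⟨b, by filter_upwards [eventually_ge_atTop 0] with t ht using hb t ht⟩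
  have hbd : BddBelow S := by
    refine ⟨a, fun z hz => ?_⟩
    obtain ⟨t, h1, h2⟩ := (hz.and (eventually_ge_atTop 0)).exists
    exact (ha t h2).trans h1
  refine ⟨sInf S, ?_⟩
  rw [Metric.tendsto_nhds]
  intro ε hε
  obtain ⟨z, hz, hzlt⟩ := exists_lt_of_csInf_lt hne (show sInf S < sInf S + ε by linarith)
  obtain ⟨T, hT⟩ := h (ε / 4) (by positivity)
  filter_upwards [hz, eventually_ge_atTop T] with t h1 h2
  rw [Real.dist_eq, abs_lt]
  refine ⟨?_, by linarith⟩
  by_contra hcon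
  have : sInf S - ε / 4 ∈ S := by
    filter_upwards [eventually_ge_atTop t] with t' ht'
    have := hT t h2 (t' - t) (by linarith)
    rw [add_sub_cancel] at this
    linarith
  have := csInf_le hbd this
  linarith
namespace Dat
variable {n : ℕ} {f : ℝ → ℝ} {c C L : ℝ} {w : EE n → ℝ → ℝ}

lemma net (d : Dat f c C L w) : ∀ ε > 0, ∃ δ > 0, ∀ t ≥ 0, ∀ x y : EE n, dist x y < δ → w x t - w y t ≤ ε := by
  intro ε hε
  obtain ⟨K, hK, hmod⟩ := d.modulus (half_pos hε)
  refine ⟨ε / (2 * (K + 1)), by positivity, fun t ht x y hxy => ?_⟩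
  have a1 := hmod K le_rfl t ht x y
  have a2 : |‖x‖ - ‖y‖| ≤ ε / (2 * (K + 1)) :=
    (abs_norm_sub_norm_le x y).trans (by rw [← dist_eq_norm]; exact hxy.le)
  have a3 := mul_le_mul_of_nonneg_left a2 hK
  have a4 : K * (ε / (2 * (K + 1))) ≤ ε / 2 := by
    have : K * (ε / (2 * (K + 1))) = K / (K + 1) * (ε / 2) := by field_simp
    rw [this]
    have : K / (K + 1) ≤ 1 := by rw [div_le_one (by positivity)]; linarith
    nlinarith
  linarith

lemma convA (d : Dat f c C L w) (R : ℝ) {ε : ℝ} (hε : 0 < ε) : ∃ T0, 0 ≤ T0 ∧ ∀ t ≥ T0, ∀ h ≥ 0, ∀ x : EE n,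
    (n : ℝ) - 1 ≤ ‖x‖ → f ‖x‖ = c → ‖x‖ ≤ R → w x (t + h) - w x t ≤ ε := by
  obtain ⟨S, hS⟩ : ∃ S : Set (EE n), S = {x | ((n : ℝ) - 1 ≤ ‖x‖ ∧ f ‖x‖ = c) ∧ ‖x‖ ≤ R} := ⟨_, rfl⟩
  obtain ⟨M, hM⟩ := d.upper
  have h1 : ∀ x ∈ S, ∃ l, Tendsto (w x) atTop (𝓝 l) := by
    intro x hx
    rw [hS] at hx
    obtain ⟨l, hl⟩ := almost_mono_lim (φ := fun t => - w x t) (a := - M) (b := - w x 0)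
      (fun t ht => by linarith [hM t ht x])
      (fun t ht => by
        have := d.monoA hx.1.1 hx.1.2 le_rfl ht
        rw [zero_add] at this; linarith)
      (fun ε hε => ⟨0, fun t ht s hs => by
        have := d.monoA hx.1.1 hx.1.2 ht hs
        linarith⟩)
    refine ⟨-l, ?_⟩
    simpa using hl.neg
  choose! v hv using h1
  have hTB : TotallyBounded S := by
    refine (isCompact_closedBall (0 : EE n) R).totallyBounded.subset ?_
    intro x hx
    rw [hS] at hx
    simpa using hx.2
  have hu := uni_net hTB d.net hv
  rw [Metric.tendstoUniformlyOn_iff] at hu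
  obtain ⟨T, hT⟩ := eventually_atTop.1 (hu (ε / 2) (by positivity))
  refine ⟨max T 0, le_max_right _ _, fun t ht h hh x a1 a2 a3 => ?_⟩
  have hx : x ∈ S := by rw [hS]; exact ⟨⟨a1, a2⟩, a3⟩
  have hTt := (le_max_left T 0).trans ht
  have b1 := hT t hTt x hx
  have b2 := hT (t + h) (by linarith) x hx
  rw [Real.dist_eq, abs_lt] at b1 b2
  linarith [b1.1, b1.2, b2.1, b2.2]

lemma fcont (d : Dat f c C L w) : ContinuousOn f (Ici 0) := by
  have hC := d.fd.C0
  rw [Metric.continuousOn_iff]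
  intro b hb ε hε
  refine ⟨ε / (C + 1), by positivity, fun a ha hab => ?_⟩
  rw [Real.dist_eq] at hab ⊢
  have := d.fd.hC a b ha hb
  rw [lt_div_iff₀ (by positivity)] at hab
  nlinarith [abs_nonneg (a - b)]

lemma kappa (d : Dat f c C L w) {ρ : ℝ} (hρ : 0 < ρ) : ∃ κ > 0, ∀ r > 0,
    (∀ a, (n : ℝ) - 1 ≤ a → f a = c → ρ ≤ |r - a|) → κ ≤ c - f r ∨ κ ≤ (n : ℝ) - 1 - r := by
  obtain ⟨Rs, hRs, hsupp⟩ := d.supp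
  obtain ⟨R, hR⟩ : ∃ R, R = max Rs ((n : ℝ) - 1) := ⟨_, rfl⟩
  have hR1 : Rs ≤ R := by rw [hR]; exact le_max_left _ _
  have hR2 : (n : ℝ) - 1 ≤ R := by rw [hR]; exact le_max_right _ _
  have hnot : ∀ r, (∀ a, (n : ℝ) - 1 ≤ a → f a = c → ρ ≤ |r - a|) → (n : ℝ) - 1 ≤ r → f r ≠ c := by
    intro r h1 h2 h3
    have := h1 r h2 h3
    simp at this
    linarith
  obtain ⟨S, hS⟩ : ∃ S : Set ℝ, S = Icc 0 R ∩ {r | ∀ a, (n : ℝ) - 1 ≤ a → f a = c → ρ ≤ |r - a|} := ⟨_, rfl⟩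
  have hcl : IsClosed {r : ℝ | ∀ a, (n : ℝ) - 1 ≤ a → f a = c → ρ ≤ |r - a|} := by
    simp only [setOf_forall]
    refine isClosed_iInter fun a => isClosed_iInter fun _ => isClosed_iInter fun _ => ?_
    exact isClosed_le continuous_const (by fun_prop)
  have hcomp : IsCompact S := by rw [hS]; exact isCompact_Icc.inter_right hcl
  have hcont : ContinuousOn (fun r => max (c - f r) ((n : ℝ) - 1 - r)) S := by
    refine ContinuousOn.sup ?_ (by fun_prop)
    refine continuousOn_const.sub (d.fcont.mono ?_)
    rw [hS]
    exact fun r hr => hr.1.1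
  have hpos : ∀ r ∈ S, 0 < max (c - f r) ((n : ℝ) - 1 - r) := by
    intro r hr
    rw [hS] at hr
    rcases lt_or_ge r ((n : ℝ) - 1) with h | h
    · exact lt_max_of_lt_right (by linarith)
    · refine lt_max_of_lt_left ?_
      have := lt_of_le_of_ne (d.cmax r h) (hnot r hr.2 h)
      linarith
  have h0 : ∃ κ > 0, ∀ r ∈ S, κ ≤ max (c - f r) ((n : ℝ) - 1 - r) := by
    rcases S.eq_empty_or_nonempty with h | h
    · exact ⟨1, one_pos, fun r hr => by rw [h] at hr; exact absurd hr (notMem_empty _)⟩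
    · obtain ⟨r0, hr0, hmin⟩ := hcomp.exists_isMinOn h hcont
      exact ⟨_, hpos r0 hr0, fun r hr => hmin hr⟩
  obtain ⟨κ, hκ, hκ2⟩ := h0
  have hbig : ∀ r, R < r → f r = 0 := fun r hr => hsupp r (by linarith)
  rcases d.c0.eq_or_lt with hc | hc
  · refine ⟨κ, hκ, fun r hr h => ?_⟩
    rcases le_or_gt r R with h1 | h1
    · exact le_max_iff.1 (hκ2 r (by rw [hS]; exact ⟨⟨hr.le, h1⟩, h⟩))
    · exact absurd ((hbig r h1).trans hc) (hnot r h (by linarith))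
  · refine ⟨min κ c, lt_min hκ hc, fun r hr h => ?_⟩
    rcases le_or_gt r R with h1 | h1
    · rw [← le_max_iff]
      exact (min_le_left _ _).trans (hκ2 r (by rw [hS]; exact ⟨⟨hr.le, h1⟩, h⟩))
    · left; rw [hbig r h1, sub_zero]; exact min_le_right _ _

end Dat

lemma X_fun_deriv (N R p q r : ℝ) : HasDerivAt (fun r => p * (max (N - r) 0) ^ 2 + q * (max (r - R) 0) ^ 2)
    (-(2 * p * max (N - r) 0) + 2 * q * max (r - R) 0) r := by
  have h1 := (hasDerivAt_pos_sq (N - r)).comp r ((hasDerivAt_id r).const_sub N)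
  have h2 := (hasDerivAt_pos_sq (r - R)).comp r ((hasDerivAt_id r).sub_const R)
  refine ((h1.const_mul p).add (h2.const_mul q)).congr_deriv ?_
  ring

lemma G_ineq {N R μ B1 κ r Fm F c b2 m : ℝ} (hN : 1 ≤ N) (hr : 0 < r) (hNR : N ≤ R) (hμ : 0 < μ) (hB1 : 0 ≤ B1)
    (hκ : 0 < κ) (hBκ : N * (Fm + κ) ≤ 2 * B1 * κ ^ 2) (hF : F ≤ Fm) (hc : 0 ≤ c)
    (hcm : N ≤ r → F ≤ c) (hb2 : R < r → b2 = 0)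
    (hm : m ≤ μ * κ) (h : κ ≤ c - F ∨ κ ≤ N - r) :
    F - c + m ≤ -(N / r * (-(2 * (μ * B1) * max (N - r) 0) + 2 * b2 * max (r - R) 0)
      + |-(2 * (μ * B1) * max (N - r) 0) + 2 * b2 * max (r - R) 0|) + (1 - μ) * (F - c) := by
  have hz : 2 * b2 * max (r - R) 0 = 0 := by
    rcases le_or_gt r R with h1 | h1
    · rw [max_eq_right (by linarith)]; ring
    · rw [hb2 h1]; ring
  rw [hz, add_zero, abs_neg]
  rcases le_total N r with h1 | h1
  · rw [max_eq_right (by linarith)]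
    simp only [mul_zero, neg_zero, abs_zero, add_zero, zero_add]
    rcases h with h | h
    · nlinarith
    · nlinarith
  · rw [max_eq_left (by linarith)]
    have h2 : 0 ≤ N - r := by linarith
    rw [abs_of_nonneg (by positivity)]
    have e : -(N / r * -(2 * (μ * B1) * (N - r)) + 2 * (μ * B1) * (N - r))
        = μ * (2 * B1 * (N - r) ^ 2 / r) := by field_simp; ring
    rw [e]
    have h3 : 0 ≤ 2 * B1 * (N - r) ^ 2 / r := by positivity
    suffices F - c + κ ≤ 2 * B1 * (N - r) ^ 2 / r by nlinarith
    rcases h with h | h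
    · linarith
    · have h4 : 2 * B1 * κ ^ 2 / N ≤ 2 * B1 * (N - r) ^ 2 / r := by
        gcongr
      have h5 : Fm + κ ≤ 2 * B1 * κ ^ 2 / N := by
        rw [le_div_iff₀ (by linarith)]; linarith
      linarith
namespace Dat
variable {n : ℕ} {f : ℝ → ℝ} {c C L : ℝ} {w : EE n → ℝ → ℝ}

lemma Fbound (d : Dat f c C L w) : ∃ Fm, 0 ≤ Fm ∧ ∀ r, 0 ≤ r → f r ≤ Fm := by
  obtain ⟨Rs, hRs, hsupp⟩ := d.supp
  have hC := d.fd.C0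
  refine ⟨C * Rs, by positivity, fun r hr => ?_⟩
  rcases le_total Rs r with h | h
  · rw [hsupp r h]; positivity
  · have a1 := d.fd.hC r Rs hr hRs.le
    rw [hsupp Rs le_rfl, sub_zero] at a1
    have a2 : |r - Rs| ≤ Rs := by rw [abs_le]; constructor <;> linarith
    exact (le_abs_self _).trans (a1.trans (mul_le_mul_of_nonneg_left a2 hC))

lemma F9 (d : Dat f c C L w) {ε : ℝ} (hε : 0 < ε) (R2 : ℝ) : ∃ T1, 0 ≤ T1 ∧ ∀ t ≥ T1, ∀ h ≥ 0,
    ∀ x : EE n, x ≠ 0 → ‖x‖ ≤ R2 → w x (t + h) - w x t ≤ 9 * ε := by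
  have hN := d.hN
  obtain ⟨N, hNd⟩ : ∃ N, N = (n : ℝ) - 1 := ⟨_, rfl⟩
  rw [← hNd] at hN
  obtain ⟨Rs, hRs, hsupp⟩ := d.supp
  obtain ⟨R, hR⟩ : ∃ R, R = max Rs (max R2 N) := ⟨_, rfl⟩
  have hRa : Rs ≤ R := by rw [hR]; exact le_max_left _ _
  have hRb : R2 ≤ R := by rw [hR]; exact (le_max_left _ _).trans (le_max_right _ _)
  have hRc : N ≤ R := by rw [hR]; exact (le_max_right _ _).trans (le_max_right _ _)
  clear hR
  obtain ⟨M, hM0, hM⟩ : ∃ M, 0 ≤ M ∧ ∀ t ≥ 0, ∀ x, w x t ≤ M := by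
    obtain ⟨M, hM⟩ := d.upper
    exact ⟨max M 0, le_max_right _ _, fun t ht x => (hM t ht x).trans (le_max_left _ _)⟩
  obtain ⟨M2, hM20, hM2⟩ := d.almost
  obtain ⟨Ml, hMl0, hMl⟩ := d.lower R2
  obtain ⟨K, hK0, hKL, hmod⟩ : ∃ K, 0 ≤ K ∧ 2 * L ≤ K ∧ ∀ t ≥ 0, ∀ x y : EE n,
      w x t - w y t ≤ ε + K * |‖x‖ - ‖y‖| := by
    obtain ⟨K1, hK1, hmod⟩ := d.modulus hε
    exact ⟨max K1 (2 * L), hK1.trans (le_max_left _ _), le_max_right _ _, hmod _ (le_max_left _ _)⟩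
  obtain ⟨ρ, hρ, hρ1, hKρ⟩ : ∃ ρ > 0, ρ ≤ 1 ∧ K * ρ ≤ ε := by
    refine ⟨min 1 (ε / (K + 1)), by positivity, min_le_left _ _, ?_⟩
    have a1 : K * min 1 (ε / (K + 1)) ≤ K * (ε / (K + 1)) :=
      mul_le_mul_of_nonneg_left (min_le_right _ _) hK0
    have a2 : K * (ε / (K + 1)) ≤ ε := by
      rw [← mul_div_assoc, div_le_iff₀ (by positivity)]; nlinarith
    linarith
  obtain ⟨T0, hT0, hconv⟩ := d.convA (R + 2) hε
  obtain ⟨κ, hκ, hκ2⟩ := d.kappa hρ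
  obtain ⟨Fm, hFm0, hFm⟩ := d.Fbound
  obtain ⟨B1, hB1, hBκ⟩ : ∃ B1, 0 ≤ B1 ∧ N * (Fm + κ) ≤ 2 * B1 * κ ^ 2 := by
    refine ⟨N * (Fm + κ) / κ ^ 2, by positivity, ?_⟩
    have : 2 * (N * (Fm + κ) / κ ^ 2) * κ ^ 2 = 2 * (N * (Fm + κ)) := by field_simp
    rw [this]
    have : 0 ≤ N * (Fm + κ) := by positivity
    linarith
  obtain ⟨μ, hμ, hμ1, hμa, hμb, hμc⟩ : ∃ μ > 0, μ < 1 ∧ μ * (B1 * N ^ 2) ≤ ε ∧ μ * M ≤ ε ∧ μ * Ml ≤ ε := by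
    obtain ⟨D, hD⟩ : ∃ D, D = B1 * N ^ 2 + M + Ml + 1 := ⟨_, rfl⟩
    have hBN : 0 ≤ B1 * N ^ 2 := by positivity
    have hDp : 0 < D := by rw [hD]; positivity
    have key : ∀ z, 0 ≤ z → z ≤ D → min (1 / 2) (ε / D) * z ≤ ε := by
      intro z hz hzD
      have : min (1 / 2) (ε / D) * z ≤ ε / D * D :=
        mul_le_mul (min_le_right _ _) hzD hz (by positivity)
      rwa [div_mul_cancel₀ _ hDp.ne'] at this
    refine ⟨min (1 / 2) (ε / D), by positivity, (min_le_left _ _).trans_lt (by norm_num), ?_, ?_, ?_⟩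
    · exact key _ hBN (by rw [hD]; linarith)
    · exact key _ hM0 (by rw [hD]; linarith)
    · exact key _ hMl0 (by rw [hD]; linarith)
  obtain ⟨b2, hb20, hb2a, hb2b⟩ : ∃ b2, 0 ≤ b2 ∧ (c = 0 → M2 ≤ b2) ∧ (c ≠ 0 → b2 = 0) := by
    by_cases h : c = 0
    · exact ⟨M2, hM20, fun _ => le_rfl, fun h' => absurd h h'⟩
    · exact ⟨0, le_rfl, fun h' => absurd h' h, fun _ => rfl⟩
  obtain ⟨m, hm, hm1, hm2⟩ : ∃ m > 0, m ≤ μ * κ ∧ m ≤ ε :=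
    ⟨min (μ * κ) ε, by positivity, min_le_left _ _, min_le_right _ _⟩
  obtain ⟨M', hM'0, hM'⟩ : ∃ M', 0 ≤ M' ∧ ∀ x, - w x T0 ≤ M' := by
    obtain ⟨M', hM'⟩ := d.sup.bdd T0
    exact ⟨max M' 0, le_max_right _ _, fun x => (hM' x T0 ⟨hT0, le_rfl⟩).trans (le_max_left _ _)⟩
  have hμ1' : 0 < 1 - μ := by linarith
  refine ⟨T0 + (M + M') / m, by positivity, fun t ht h hh x hx hxR => ?_⟩
  obtain ⟨T, hT⟩ : ∃ T, T = t - T0 := ⟨_, rfl⟩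
  have hTm : (M + M') / m ≤ T := by rw [hT]; linarith
  have hTp : 0 ≤ T := le_trans (by positivity) hTm
  rw [div_le_iff₀ hm] at hTm
  have hXd := X_fun_deriv N R (μ * B1) b2
  obtain ⟨B, hB⟩ : ∃ B : Set ℝ, B = {r | ∃ a, N ≤ a ∧ f a = c ∧ |r - a| < ρ} := ⟨_, rfl⟩
  have key := DE' d.hn (d.sub.shift (s := T0 + h) (by positivity)) ((d.sup.shift hT0).scale hμ1')
    (T := T) (m := m) (K := K) (E := 6 * ε) (Z := m * (T + 1)) (a := - c) (B := B)
    (X := fun r => μ * B1 * (max (N - r) 0) ^ 2 + b2 * (max (r - R) 0) ^ 2)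
    (X' := fun r => -(2 * (μ * B1) * max (N - r) 0) + 2 * b2 * max (r - R) 0)
    d.fd (fun r => by ring) hTp hK0 hKL (fun r _ => hXd r) (fun r _ => by fun_prop)
    (fun r _ => by positivity) ?_ (by positivity) le_rfl ?_ ?_ T ⟨hTp, le_rfl⟩ x x hx hx
  · have e1 : T0 + h + T = t + h := by rw [hT]; ring
    have e2 : T0 + T = t := by rw [hT]; ring
    rw [e1, e2] at key
    have e3 : max (‖x‖ - R) 0 = 0 := max_eq_right (by linarith)
    simp only [sub_self, abs_zero, mul_zero, add_zero] at key
    rw [e3] at key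
    have e4 : μ * B1 * (max (N - ‖x‖) 0) ^ 2 ≤ μ * B1 * N ^ 2 := by
      have : max (N - ‖x‖) 0 ≤ N := max_le (by linarith [norm_nonneg x]) (by linarith)
      gcongr
    have e5 : - Ml ≤ w x t := hMl t (le_trans (by positivity) ht) x hxR
    have e6 : μ * (-Ml) ≤ μ * w x t := mul_le_mul_of_nonneg_left e5 hμ.le
    have e7 : μ * B1 * N ^ 2 = μ * (B1 * N ^ 2) := by ring
    simp only [ne_eq, OfNat.ofNat_ne_zero, not_false_eq_true, zero_pow, mul_zero, add_zero] at key
    linarith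
  · intro r hr hrB
    rw [← hNd]
    refine G_ineq hN hr hRc hμ hB1 hκ hBκ (hFm r hr.le) d.c0 (fun h => d.cmax r (by rw [← hNd]; exact h)) ?_ hm1 ?_
    · intro hRr
      apply hb2b
      intro hc
      apply hrB
      rw [hB]
      exact ⟨r, by linarith, by rw [hc]; exact hsupp r (by linarith), by simpa using hρ⟩
    · rw [hNd]
      refine hκ2 r hr fun a h1 h2 => ?_
      by_contra hcon
      apply hrB
      rw [hB]
      exact ⟨a, by rw [hNd]; exact h1, h2, not_le.1 hcon⟩
  · intro x y _ _
    have a1 := hM (T0 + h + 0) (by positivity) x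
    have a2 : (1 - μ) * (- w y T0) ≤ (1 - μ) * M' := mul_le_mul_of_nonneg_left (hM' y) hμ1'.le
    have a3 : (1 - μ) * M' ≤ M' := by nlinarith
    have a4 : 0 ≤ μ * B1 * (max (N - ‖y‖) 0) ^ 2 + b2 * (max (‖y‖ - R) 0) ^ 2 := by positivity
    have a5 : 0 ≤ K * |‖x‖ - ‖y‖| := by positivity
    have a6 : (1 - μ) * w y (T0 + 0) = - ((1 - μ) * (- w y T0)) := by rw [add_zero]; ring
    rw [a6]
    linarith
  · intro τ hτ x y hx hy hyB
    rw [hB] at hyB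
    obtain ⟨a, ha1, ha2, ha3⟩ := hyB
    have hτ0 := hτ.1
    have hs0 : 0 ≤ T0 + τ := by linarith
    have e1 : T0 + h + τ = T0 + τ + h := by ring
    rw [e1]
    have a1 : μ * w y (T0 + τ) ≤ μ * M := mul_le_mul_of_nonneg_left (hM _ hs0 y) hμ.le
    rcases le_or_gt ‖y‖ (R + 1) with h1 | h1
    · obtain ⟨z, hz⟩ := d.exists_norm (r := a) (by linarith)
      have b1 := hmod (T0 + τ + h) (by linarith) x z
      have b2' := hmod (T0 + τ) hs0 z y
      have ha4 := abs_lt.1 ha3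
      have b3 := hconv (T0 + τ) (by linarith) h hh z (by rw [hz, ← hNd]; exact ha1) (by rw [hz]; exact ha2)
        (by rw [hz]; linarith [ha4.1])
      rw [hz] at b1 b2'
      have b4 : K * |a - ‖y‖| ≤ K * ρ := mul_le_mul_of_nonneg_left (by rw [abs_sub_comm]; exact ha3.le) hK0
      have b5 : K * |‖x‖ - a| ≤ K * (|‖x‖ - ‖y‖| + ρ) := by
        refine mul_le_mul_of_nonneg_left ?_ hK0
        have := abs_sub_le ‖x‖ ‖y‖ a
        linarith
      have b6 : 0 ≤ μ * B1 * (max (N - ‖y‖) 0) ^ 2 + b2 * (max (‖y‖ - R) 0) ^ 2 := by positivity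
      linarith
    · have hc : c = 0 := by
        rw [← ha2]
        refine hsupp a ?_
        have := (abs_lt.1 ha3).2
        linarith
      have b1 := hmod (T0 + τ + h) (by linarith) x y
      have b3 := hM2 h hh (T0 + τ) hs0 y hy
      rw [add_comm h] at b3
      have b4 := hb2a hc
      have b5 : b2 ≤ b2 * (max (‖y‖ - R) 0) ^ 2 := by
        have : 1 ≤ max (‖y‖ - R) 0 := le_max_of_le_left (by linarith)
        have : 1 ≤ (max (‖y‖ - R) 0) ^ 2 := one_le_pow₀ this
        nlinarith
      have b6 : 0 ≤ μ * B1 * (max (N - ‖y‖) 0) ^ 2 := by positivity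
      linarith

lemma F (d : Dat f c C L w) {ε : ℝ} (hε : 0 < ε) (R2 : ℝ) : ∃ T1, ∀ t ≥ T1, ∀ h ≥ 0,
    ∀ x : EE n, ‖x‖ ≤ R2 → w x (t + h) ≤ w x t + ε := by
  obtain ⟨T1, hT1, h1⟩ := d.F9 (ε := ε / 10) (by positivity) R2
  obtain ⟨T2, hT2, h2⟩ := d.F9 (ε := ε / 18) (by positivity) 1
  refine ⟨max T1 T2, fun t ht h hh x hx => ?_⟩
  by_cases hx0 : x = 0
  · obtain ⟨δ, hδ, hd⟩ := d.net (ε / 4) (by positivity)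
    obtain ⟨y, hy⟩ := d.exists_norm (r := min 1 (δ / 2)) (by positivity)
    have hyp : 0 < ‖y‖ := by rw [hy]; positivity
    have ht0 : 0 ≤ t := hT1.trans ((le_max_left _ _).trans ht)
    have a := h2 t ((le_max_right _ _).trans ht) h hh y (norm_pos_iff.1 hyp) (by rw [hy]; exact min_le_left _ _)
    have hyd : ‖y‖ < δ := by rw [hy]; exact (min_le_right _ _).trans_lt (by linarith)
    subst hx0
    have b1 := hd (t + h) (by linarith) 0 y (by rw [dist_eq_norm, zero_sub, norm_neg]; exact hyd)
    have b2 := hd t ht0 y 0 (by rw [dist_eq_norm, sub_zero]; exact hyd)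
    linarith
  · have := h1 t ((le_max_left _ _).trans ht) h hh x hx0 hx
    linarith

theorem limit (d : Dat f c C L w) : ∃ v : EE n → ℝ, Continuous v ∧
    ∀ K : Set (EE n), IsCompact K → TendstoUniformlyOn (fun t x => w x t) v atTop K := by
  have h1 : ∀ x : EE n, ∃ l, Tendsto (w x) atTop (𝓝 l) := by
    intro x
    obtain ⟨M, hM⟩ := d.upper
    obtain ⟨M', _, hM'⟩ := d.lower ‖x‖
    refine almost_mono_lim (fun t ht => hM' t ht x le_rfl) (fun t ht => hM t ht x) ?_
    intro ε hε
    obtain ⟨T, hT⟩ := d.F hε ‖x‖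
    exact ⟨T, fun t ht s hs => hT t ht s hs x le_rfl⟩
  choose v hv using h1
  have hdv : ∀ ε > 0, ∃ δ > 0, ∀ x y : EE n, dist x y < δ → v x - v y ≤ ε := by
    intro ε hε
    obtain ⟨δ, hδ, hd⟩ := d.net ε hε
    refine ⟨δ, hδ, fun x y hxy => ?_⟩
    refine le_of_tendsto ((hv x).sub (hv y)) ?_
    filter_upwards [eventually_ge_atTop 0] with t ht
    exact hd t ht x y hxy
  refine ⟨v, ?_, fun K hK => uni_net hK.totallyBounded d.net fun x _ => hv x⟩
  rw [Metric.continuous_iff]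
  intro b ε hε
  obtain ⟨δ, hδ, hd⟩ := hdv (ε / 2) (by positivity)
  refine ⟨δ, hδ, fun a hab => ?_⟩
  have a1 := hd a b hab
  have a2 := hd b a (by rwa [dist_comm])
  rw [Real.dist_eq, abs_lt]
  constructor <;> linarith

end Dat
lemma grad_add_quart {n : ℕ} {φ : EE n → ℝ} (hφ : ContDiff ℝ 2 φ) (x₀ y : EE n) :
    gradient (fun x => φ x + (‖x - x₀‖ ^ 2) ^ 2) y = gradient φ y + (4 * ‖y - x₀‖ ^ 2) • (y - x₀) := by
  apply HasGradientAt.gradient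
  rw [hasGradientAt_iff_hasFDerivAt]
  have h0 : HasFDerivAt (fun x : EE n => x - x₀) (ContinuousLinearMap.id ℝ (EE n)) y :=
    (hasFDerivAt_id y).sub_const x₀
  have h := (hasStrictFDerivAt_norm_sq (y - x₀)).hasFDerivAt.comp y h0
  have hg : HasFDerivAt φ ((InnerProductSpace.toDual ℝ (EE n)) (gradient φ y)) y :=
    (hasGradientAt_iff_hasFDerivAt).1 (hφ.differentiable (by norm_num) y).hasGradientAt
  refine HasFDerivAt.congr_fderiv (hg.add (h.pow 2)) ?_
  ext z
  simp [inner_smul_left, inner_add_left]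
  ring

lemma gradient_contDiff {n : ℕ} {φ : EE n → ℝ} (hφ : ContDiff ℝ 2 φ) : ContDiff ℝ 1 (gradient φ) := by
  have h1 : ContDiff ℝ 1 (fderiv ℝ φ) := hφ.fderiv_right (by norm_num)
  exact (InnerProductSpace.toDual ℝ (EE n)).symm.contDiff.comp h1

lemma hess_add_quart {n : ℕ} {φ : EE n → ℝ} (hφ : ContDiff ℝ 2 φ) (x₀ : EE n) :
    hess (fun x => φ x + (‖x - x₀‖ ^ 2) ^ 2) x₀ = hess φ x₀ := by
  have e : gradient (fun x => φ x + (‖x - x₀‖ ^ 2) ^ 2)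
      = fun y => gradient φ y + (4 * ‖y - x₀‖ ^ 2) • (y - x₀) := by
    funext y; exact grad_add_quart hφ x₀ y
  rw [hess, e, hess]
  apply HasFDerivAt.fderiv
  have h0 : HasFDerivAt (fun x : EE n => x - x₀) (ContinuousLinearMap.id ℝ (EE n)) x₀ :=
    (hasFDerivAt_id x₀).sub_const x₀
  have h := (HasFDerivAt.comp (f := fun x : EE n => x - x₀) x₀ (hasStrictFDerivAt_norm_sq (x₀ - x₀)).hasFDerivAt h0).const_mul 4
  have hg : HasFDerivAt (gradient φ) (fderiv ℝ (gradient φ) x₀) x₀ :=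
    ((gradient_contDiff hφ).differentiable (by norm_num) x₀).hasFDerivAt
  refine HasFDerivAt.congr_fderiv (hg.add (h.smul h0)) ?_
  ext z
  simp

lemma hess_continuous {n : ℕ} {φ : EE n → ℝ} (hφ : ContDiff ℝ 2 φ) : Continuous (hess φ) :=
  (gradient_contDiff hφ).continuous_fderiv (by norm_num)

lemma clmTrace_continuous {n : ℕ} : Continuous (clmTrace (n := n)) := by
  have := LinearMap.continuous_of_finiteDimensional
    ((LinearMap.trace ℝ (EE n)).comp (ContinuousLinearMap.coeLM ℝ : (EE n →L[ℝ] EE n) →ₗ[ℝ] _))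
  exact this

lemma trProj_continuous {n : ℕ} : Continuous (fun p : (EE n →L[ℝ] EE n) × EE n => trProj p.1 p.2) := by
  unfold trProj
  exact (clmTrace_continuous.comp continuous_fst).sub (by fun_prop)

/-- one approximation step in the stability argument -/
lemma stab_step {n : ℕ} {σ c : ℝ} {g : EE n → ℝ} {u : EE n → ℝ → ℝ} {v Φ : EE n → ℝ}
    (hu : PSub σ g u)
    (hc : ContinuousOn (fun p : EE n × ℝ => u p.1 p.2) (Set.univ ×ˢ Set.Ici 0))
    (hv : ∀ K : Set (EE n), IsCompact K → TendstoUniformlyOn (fun t x => u x t - c * t) v atTop K)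
    (hΦ : ContDiff ℝ 2 Φ) {x₀ : EE n} {η₀ : ℝ} (hη₀ : 0 < η₀)
    (hmax : ∀ x, ‖x - x₀‖ < η₀ → v x - Φ x ≤ v x₀ - Φ x₀ - (‖x - x₀‖ ^ 2) ^ 2) {e : ℝ} (he : 0 < e) :
    ∃ (x : EE n) (s : ℝ) (η : EE n), ‖x - x₀‖ < e ∧ |s| < e ∧ ‖η‖ ≤ 1 ∧
      (gradient Φ x ≠ 0 → η = ‖gradient Φ x‖⁻¹ • gradient Φ x) ∧
      c + 2 * s - (trProj (hess Φ x) η + σ * ‖gradient Φ x‖) ≤ g x := by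
  obtain ⟨δ, hδ, hδe, hδη⟩ : ∃ δ > 0, δ < e ∧ δ < η₀ := by
    refine ⟨min e η₀ / 2, by positivity, ?_, ?_⟩
    · have := min_le_left e η₀; linarith
    · have := min_le_right e η₀; linarith
  obtain ⟨ν, hν, hν1, hν2⟩ : ∃ ν > 0, 2 * ν < (δ ^ 2) ^ 2 ∧ 2 * ν < δ ^ 2 := by
    refine ⟨min ((δ ^ 2) ^ 2) (δ ^ 2) / 4, by positivity, ?_, ?_⟩
    · have := min_le_left ((δ ^ 2) ^ 2) (δ ^ 2)
      have : 0 < (δ ^ 2) ^ 2 := by positivity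
      linarith
    · have := min_le_right ((δ ^ 2) ^ 2) (δ ^ 2)
      have : 0 < δ ^ 2 := by positivity
      linarith
  have hcomp := isCompact_closedBall x₀ δ
  have hun := hv _ hcomp
  rw [Metric.tendstoUniformlyOn_iff] at hun
  obtain ⟨T', hT'⟩ := eventually_atTop.1 (hun ν hν)
  obtain ⟨T, hT1, hT2⟩ : ∃ T, T' ≤ T - δ ∧ 0 < T - δ :=
    ⟨max T' 1 + δ, by simp, by simp⟩
  have hcl : ∀ x : EE n, ∀ t, ‖x - x₀‖ ≤ δ → T - δ ≤ t → |v x - (u x t - c * t)| < ν := by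
    intro x t hx ht
    have := hT' t (hT1.trans ht) x (by rwa [Metric.mem_closedBall, dist_eq_norm])
    rwa [Real.dist_eq] at this
  have hK : IsCompact (Metric.closedBall x₀ δ ×ˢ Icc (T - δ) (T + δ)) := hcomp.prod isCompact_Icc
  have hψ : ContinuousOn (fun p : EE n × ℝ => u p.1 p.2 - (Φ p.1 + (c * p.2 + (p.2 - T) ^ 2)))
      (Metric.closedBall x₀ δ ×ˢ Icc (T - δ) (T + δ)) := by
    refine ContinuousOn.sub (hc.mono ?_) ?_
    · rintro ⟨x, t⟩ ⟨_, h2⟩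
      exact ⟨mem_univ _, by simp only [mem_Ici]; linarith [h2.1]⟩
    · have := hΦ.continuous
      fun_prop
  have hmem : (x₀, T) ∈ Metric.closedBall x₀ δ ×ˢ Icc (T - δ) (T + δ) :=
    ⟨Metric.mem_closedBall_self hδ.le, by constructor <;> simp only <;> linarith⟩
  obtain ⟨⟨x, t⟩, hp, hpmax⟩ := hK.exists_isMaxOn ⟨_, hmem⟩ hψ
  obtain ⟨hp1, hp2⟩ := hp
  simp only [Metric.mem_closedBall, dist_eq_norm] at hp1
  simp only at hp2
  have b0 := hpmax hmem
  simp only [mem_setOf_eq] at b0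
  have b1 := abs_lt.1 (hcl x₀ T (by simpa using hδ.le) (by linarith))
  have b2 := abs_lt.1 (hcl x t hp1 hp2.1)
  have b3 := hmax x (by linarith)
  have b4 : (‖x - x₀‖ ^ 2) ^ 2 + (t - T) ^ 2 < 2 * ν := by
    have : (T - T) ^ 2 = 0 := by simp
    linarith [b1.1, b1.2, b2.1, b2.2]
  have c1 : ‖x - x₀‖ < δ := by
    by_contra hcon
    have h1 : δ ≤ ‖x - x₀‖ := not_lt.1 hcon
    have : (δ ^ 2) ^ 2 ≤ (‖x - x₀‖ ^ 2) ^ 2 := by gcongr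
    nlinarith [sq_nonneg (t - T)]
  have c2 : |t - T| < δ := by
    apply abs_lt_of_sq_lt_sq _ hδ.le
    nlinarith [sq_nonneg (‖x - x₀‖ ^ 2)]
  have c2' := abs_lt.1 c2
  have hloc : IsLocalMax (fun p : EE n × ℝ => u p.1 p.2 - (Φ p.1 + (c * p.2 + (p.2 - T) ^ 2))) (x, t) := by
    apply hpmax.isLocalMax
    apply prod_mem_nhds
    · exact mem_of_superset (Metric.isOpen_ball.mem_nhds (by rwa [Metric.mem_ball, dist_eq_norm]))
        Metric.ball_subset_closedBall
    · exact Icc_mem_nhds (by linarith) (by linarith)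
  have hC : ContDiff ℝ 2 (fun p : EE n × ℝ => Φ p.1 + (c * p.2 + (p.2 - T) ^ 2)) :=
    (hΦ.comp contDiff_fst).add (by fun_prop)
  have hmain := hu (fun x t => Φ x + (c * t + (t - T) ^ 2)) hC x t (by linarith) hloc
  have e0 : ∀ y, gradient (fun z => Φ z + (c * t + (t - T) ^ 2)) y = gradient Φ y := by
    intro y; simp [gradient]
  have e1 : sGrad (fun x t => Φ x + (c * t + (t - T) ^ 2)) x t = gradient Φ x := e0 x
  have e2 : sHess (fun x t => Φ x + (c * t + (t - T) ^ 2)) x t = hess Φ x := by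
    simp only [sHess, hess]
    congr 1
    funext y
    exact e0 y
  have e3 : tDeriv (fun (x : EE n) t => Φ x + (c * t + (t - T) ^ 2)) x t = c + 2 * (t - T) := by
    have h1 : HasDerivAt (fun s => Φ x + (c * s + (s - T) ^ 2)) (c + 2 * (t - T)) t := by
      have := (((hasDerivAt_id t).const_mul c).add (((hasDerivAt_id t).sub_const T).pow 2)).const_add (Φ x)
      refine this.congr_deriv ?_
      simp
    exact h1.deriv
  rw [e1, e2, e3] at hmain
  by_cases hgr : gradient Φ x = 0
  · obtain ⟨η, h1, h2⟩ := hmain.2 hgr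
    refine ⟨x, t - T, η, by linarith, by linarith, h1, fun h => absurd hgr h, ?_⟩
    rw [hgr, norm_zero, mul_zero, add_zero]
    exact h2
  · refine ⟨x, t - T, ‖gradient Φ x‖⁻¹ • gradient Φ x, by linarith, by linarith, ?_, fun _ => rfl, hmain.1 hgr⟩
    rw [norm_smul, norm_inv, norm_norm, inv_mul_cancel₀ (norm_ne_zero_iff.2 hgr)]

theorem stability {n : ℕ} {σ c : ℝ} {g : EE n → ℝ} {u : EE n → ℝ → ℝ} {v : EE n → ℝ}
    (hu : PSub σ g u) (hg : Continuous g)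
    (hc : ContinuousOn (fun p : EE n × ℝ => u p.1 p.2) (Set.univ ×ˢ Set.Ici 0))
    (hv : ∀ K : Set (EE n), IsCompact K → TendstoUniformlyOn (fun t x => u x t - c * t) v atTop K) :
    SSub σ (fun x => g x - c) v := by
  intro φ hφ x₀ hm
  obtain ⟨Φ, hΦd⟩ : ∃ Φ : EE n → ℝ, Φ = fun x => φ x + (‖x - x₀‖ ^ 2) ^ 2 := ⟨_, rfl⟩
  have hΦ : ContDiff ℝ 2 Φ := by
    rw [hΦd]
    exact hφ.add (((contDiff_id.sub contDiff_const).norm_sq ℝ).pow 2)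
  have hgr : gradient Φ x₀ = gradient φ x₀ := by
    rw [hΦd, grad_add_quart hφ]; simp
  have hhs : hess Φ x₀ = hess φ x₀ := by rw [hΦd, hess_add_quart hφ]
  obtain ⟨η₀, hη₀, hη⟩ := Metric.eventually_nhds_iff.1 hm
  have hmax : ∀ x, ‖x - x₀‖ < η₀ → v x - Φ x ≤ v x₀ - Φ x₀ - (‖x - x₀‖ ^ 2) ^ 2 := by
    intro x hx
    have := hη (y := x) (by rwa [dist_eq_norm])
    rw [hΦd]
    simp only [sub_self, norm_zero]
    norm_num
    linarith
  have hstep := fun k : ℕ => stab_step hu hc hv hΦ hη₀ hmax (e := 1 / ((k : ℝ) + 1)) (by positivity)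
  choose x s η hx hs hη1 hη2 hin using hstep
  obtain ⟨ηl, hηl, ψ, hψ, hlim⟩ := (isCompact_closedBall (0 : EE n) 1).tendsto_subseq
    (x := η) (fun k => by simpa using hη1 k)
  have t0 : Tendsto (fun k : ℕ => 1 / ((k : ℝ) + 1)) atTop (𝓝 0) := tendsto_one_div_add_atTop_nhds_zero_nat
  have tx : Tendsto (fun k => x (ψ k)) atTop (𝓝 x₀) := by
    have : Tendsto x atTop (𝓝 x₀) := by
      rw [tendsto_iff_norm_sub_tendsto_zero]
      exact squeeze_zero (fun k => norm_nonneg _) (fun k => (hx k).le) t0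
    exact this.comp hψ.tendsto_atTop
  have ts : Tendsto (fun k => s (ψ k)) atTop (𝓝 0) := by
    have : Tendsto s atTop (𝓝 0) := squeeze_zero_norm (fun k => (hs k).le) t0
    exact this.comp hψ.tendsto_atTop
  have tgr : Tendsto (fun k => gradient Φ (x (ψ k))) atTop (𝓝 (gradient Φ x₀)) :=
    ((gradient_contDiff hΦ).continuous.tendsto x₀).comp tx
  have ths : Tendsto (fun k => hess Φ (x (ψ k))) atTop (𝓝 (hess Φ x₀)) :=
    ((hess_continuous hΦ).tendsto x₀).comp tx
  have ttr : Tendsto (fun k => trProj (hess Φ (x (ψ k))) (η (ψ k))) atTop (𝓝 (trProj (hess Φ x₀) ηl)) :=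
    (trProj_continuous.tendsto (hess Φ x₀, ηl)).comp (ths.prodMk_nhds hlim)
  have hfin : c + 2 * 0 - (trProj (hess Φ x₀) ηl + σ * ‖gradient Φ x₀‖) ≤ g x₀ := by
    refine le_of_tendsto_of_tendsto' (((ts.const_mul 2).const_add c).sub (ttr.add (tgr.norm.const_mul σ)))
      ((hg.tendsto x₀).comp tx) (fun k => hin (ψ k))
  refine ⟨fun h => ?_, fun h => ?_⟩
  · rw [← hgr] at h ⊢
    rw [← hhs]
    have hev : ∀ᶠ k in atTop, η (ψ k) = ‖gradient Φ (x (ψ k))‖⁻¹ • gradient Φ (x (ψ k)) := by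
      filter_upwards [tgr.eventually_ne h] with k hk
      exact hη2 (ψ k) hk
    have t1 : Tendsto (fun k => ‖gradient Φ (x (ψ k))‖⁻¹ • gradient Φ (x (ψ k))) atTop
        (𝓝 (‖gradient Φ x₀‖⁻¹ • gradient Φ x₀)) :=
      (tgr.norm.inv₀ (norm_ne_zero_iff.2 h)).smul tgr
    have t2 : Tendsto (fun k => η (ψ k)) atTop (𝓝 (‖gradient Φ x₀‖⁻¹ • gradient Φ x₀)) :=
      t1.congr' (hev.mono fun k hk => hk.symm)
    have := tendsto_nhds_unique hlim t2
    rw [this] at hfin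
    linarith
  · refine ⟨ηl, by simpa using hηl, ?_⟩
    rw [← hgr] at h
    rw [h, norm_zero] at hfin
    rw [← hhs]
    linarith
/-- Large time behavior in the radially symmetric case: the solution
of the level-set flow with radial source `f(x) = f̃(|x|)` and radial initial data
`u₀(x) = ũ₀(|x|)` satisfies `u(x,t) - c·t → v_∞(x)` locally uniformly, where `v_∞` is a
viscosity solution of the stationary problem and `c = max_{|x| ≥ n-1} f(x)`. -/
theorem stmt_10 (n : ℕ) (hn : 2 ≤ n)
    (ftilde : ℝ → ℝ) (hfC1 : ContDiffOn ℝ 1 ftilde (Set.Ici 0))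
    (hfnonneg : ∀ r ∈ Set.Ici (0 : ℝ), 0 ≤ ftilde r)
    (hfsupp : ∃ R : ℝ, 0 < R ∧ ∀ r ≥ R, ftilde r = 0)
    (hfne : ∃ r ∈ Set.Ici (0 : ℝ), ftilde r ≠ 0)
    (f : EuclideanSpace ℝ (Fin n) → ℝ) (hf : ∀ x, f x = ftilde ‖x‖)
    (u₀ : ℝ → ℝ) (hu₀bdd : ∃ M : ℝ, ∀ r ∈ Set.Ici (0 : ℝ), |u₀ r| ≤ M)
    (hu₀uc : UniformContinuousOn u₀ (Set.Ici 0))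
    (u : EuclideanSpace ℝ (Fin n) → ℝ → ℝ)
    (hucont : ContinuousOn (fun p : EuclideanSpace ℝ (Fin n) × ℝ => u p.1 p.2)
      (Set.univ ×ˢ Set.Ici 0))
    (hubuc : ∀ T > (0 : ℝ),
      (∃ M : ℝ, ∀ x : EuclideanSpace ℝ (Fin n), ∀ t ∈ Set.Icc (0 : ℝ) T, |u x t| ≤ M) ∧
      UniformContinuousOn (fun p : EuclideanSpace ℝ (Fin n) × ℝ => u p.1 p.2)
        (Set.univ ×ˢ Set.Icc (0 : ℝ) T))
    (hinit : ∀ x, u x 0 = u₀ ‖x‖)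
    (hsub : ParabSubsol f Set.univ u) (hsuper : ParabSupersol f Set.univ u)
    (c : ℝ) (hc : IsGreatest (f '' {x : EuclideanSpace ℝ (Fin n) | (n : ℝ) - 1 ≤ ‖x‖}) c) :
    ∃ vinf : EuclideanSpace ℝ (Fin n) → ℝ,
      Continuous vinf ∧
      StatSubsol (fun x => f x - c) Set.univ vinf ∧
      StatSupersol (fun x => f x - c) Set.univ vinf ∧
      ∀ K : Set (EuclideanSpace ℝ (Fin n)), IsCompact K →
        TendstoUniformlyOn (fun t x => u x t - c * t) vinf Filter.atTop K := by
  have hN : (1 : ℝ) ≤ (n : ℝ) - 1 := by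
    have : (2 : ℝ) ≤ n := by exact_mod_cast hn
    linarith
  obtain ⟨C, L, hC0, hL0, hfC, hfL⟩ := f_facts hN hfC1 hfsupp
  have hff : f = fun x => ftilde ‖x‖ := funext hf
  have hfc : ContinuousOn ftilde (Ici 0) := hfC1.continuousOn
  have hfcont : Continuous f := by
    rw [hff]
    exact hfc.comp_continuous continuous_norm (fun x => norm_nonneg x)
  have hfc' : ContinuousOn ftilde (Ioi 0) := hfc.mono Ioi_subset_Ici_self
  have p1 : PSub 1 f u := PSub_of_sub hsub
  have p2 : PSub (-1) (fun x => - f x) (fun x t => - u x t) := PSub_of_super hsuper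
  have q1 : RadSub 1 (fun r => ftilde r - c) (fun x t => u x t - c * t) := by
    refine RadSub_drift (RadSub_of_PSub ?_ hucont hfc') c
    rw [hff] at p1; exact p1
  have q2 : RadSub (-1) (fun r => -(ftilde r - c)) (fun x t => -(u x t - c * t)) := by
    have : RadSub (-1) (fun r => - ftilde r) (fun x t => - u x t) := by
      refine RadSub_of_PSub (g := fun r => - ftilde r) ?_ hucont.neg hfc'.neg
      rw [hff] at p2; exact p2
    have h := RadSub_drift this (-c)
    have e1 : (fun r => -(ftilde r - c)) = fun r => - ftilde r - -c := by funext r; ring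
    have e2 : (fun (x : EE n) t => -(u x t - c * t)) = fun x t => - u x t - -c * t := by
      funext x t; ring
    rw [e1, e2]; exact h
  have hwc : ContinuousOn (fun p : EE n × ℝ => u p.1 p.2 - c * p.2) (Set.univ ×ˢ Set.Ici 0) :=
    hucont.sub (by fun_prop)
  have hbd : ∀ T, ∃ M, ∀ x : EE n, ∀ t ∈ Icc 0 T, |u x t - c * t| ≤ M := by
    intro T
    obtain ⟨⟨M, hM⟩, _⟩ := hubuc (max T 1) (by positivity)
    refine ⟨M + |c| * max T 1, fun x t ht => ?_⟩
    have ht' : t ≤ max T 1 := ht.2.trans (le_max_left _ _)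
    have a1 := hM x t ⟨ht.1, ht'⟩
    have a2 : |c * t| ≤ |c| * max T 1 := by
      rw [abs_mul, abs_of_nonneg ht.1]
      exact mul_le_mul_of_nonneg_left ht' (abs_nonneg c)
    have := abs_sub (u x t) (c * t)
    linarith
  have htuc : ∀ T, TimeUC (fun (x : EE n) t => u x t - c * t) T := by
    intro T ν hν
    obtain ⟨_, huc⟩ := hubuc (max T 1) (by positivity)
    rw [Metric.uniformContinuousOn_iff] at huc
    obtain ⟨δ, hδ, hd⟩ := huc (ν / 2) (by positivity)
    refine ⟨min δ (ν / (2 * (|c| + 1))), by positivity, fun x t ht t' ht' hh => ?_⟩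
    have h1 : |t - t'| < δ := lt_of_lt_of_le hh (min_le_left _ _)
    have h2 : |t - t'| < ν / (2 * (|c| + 1)) := lt_of_lt_of_le hh (min_le_right _ _)
    have a1 := hd (x, t) ⟨mem_univ _, ht.1, ht.2.trans (le_max_left _ _)⟩
      (x, t') ⟨mem_univ _, ht'.1, ht'.2.trans (le_max_left _ _)⟩
      (by rw [Prod.dist_eq, dist_self, Real.dist_eq]; exact max_lt hδ h1)
    rw [Real.dist_eq] at a1
    have a2 : |c| * |t - t'| ≤ ν / 2 := by
      rw [lt_div_iff₀ (by positivity)] at h2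
      nlinarith [abs_nonneg c, abs_nonneg (t - t')]
    have e : u x t - c * t - (u x t' - c * t') = (u x t - u x t') - c * (t - t') := by ring
    simp only
    rw [e]
    have := abs_sub (u x t - u x t') (c * (t - t'))
    rw [abs_mul] at this
    linarith
  have hd : Dat ftilde c C L (fun (x : EE n) t => u x t - c * t) := by
    refine ⟨hn, ⟨hC0, hL0, hfC, hfL⟩, ⟨q1, hwc, ?_, htuc⟩, ⟨q2, hwc, ?_, htuc⟩, ?_, hfnonneg, hfsupp, ?_, ?_⟩
    · intro T
      obtain ⟨M, hM⟩ := hbd T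
      exact ⟨M, fun x t ht => (le_abs_self _).trans (hM x t ht)⟩
    · intro T
      obtain ⟨M, hM⟩ := hbd T
      exact ⟨M, fun x t ht => (neg_le_abs _).trans (hM x t ht)⟩
    · intro ε hε
      rw [Metric.uniformContinuousOn_iff] at hu₀uc
      obtain ⟨δ, hδ, h1⟩ := hu₀uc ε hε
      refine ⟨δ, hδ, fun x y hxy => ?_⟩
      have := h1 ‖x‖ (norm_nonneg x) ‖y‖ (norm_nonneg y) (by rwa [Real.dist_eq])
      simp only [hinit, mul_zero, sub_zero]
      rwa [Real.dist_eq] at this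
    · intro r hr
      haveI : Nonempty (Fin n) := ⟨⟨0, by omega⟩⟩
      haveI : Nontrivial (EE n) := inferInstance
      obtain ⟨x, hx⟩ := exists_norm_eq (EE n) (c := r) (by linarith)
      rw [← hx, ← hf x]
      exact hc.2 ⟨x, by rw [← hx] at hr; exact hr, rfl⟩
    · obtain ⟨x, hx, hxc⟩ := hc.1
      exact ⟨‖x‖, hx, by rw [← hf x]; exact hxc⟩
  obtain ⟨v, hv, hconv⟩ := hd.limit
  have s1 := stability (c := c) p1 hfcont hucont hconv
  have s2 : SSub (-1) (fun x => - f x - -c) (fun x => - v x) := by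
    refine stability (c := -c) p2 hfcont.neg hucont.neg ?_
    intro K hK
    have h := hconv K hK
    rw [Metric.tendstoUniformlyOn_iff] at h ⊢
    intro ε hε
    filter_upwards [h ε hε] with t ht x hx
    have := ht x hx
    rw [Real.dist_eq] at this ⊢
    have e : - v x - (- u x t - -c * t) = -(v x - (u x t - c * t)) := by ring
    rw [e, abs_neg]
    exact this
  refine ⟨v, hv, sub_of_SSub s1, super_of_SSub ?_, hconv⟩
  have e : (fun x => -(f x - c)) = fun x => - f x - -c := by funext x; ring
  rw [e]; exact s2
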